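/- arXiv:1812.09637 — 2 statements merged into one kernel-verified Lean document; each statement's English description precedes it below -/
import Mathlib

section
/- Given the setup (Ω, 𝓕, P, F, W), there exists a stochastic integral mapping, i.e., a mapping I : L² → C satisfying properties (1) and (2). -/
/-!
Itô's construction by approximation in probability. Call an integrand elementary if it is a finite
sum `∑ ξⱼ 1_{(pⱼ, qⱼ]}` with `ξⱼ` known at time `pⱼ`; its integral process is explicit and continuous.
Write `⟨X⟩ᵤ = ∫₀ᵘ X² ds` for the energy of `X`. Three facts carry the proof.

* A maximal inequality (`elem_max`): if `X` is elementary with integral `J`, then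
  `P(sup_{[0,u]} |J| > ε) ≤ δ / ε² + P(⟨X⟩ᵤ > δ)`. It comes from the discrete Itô isometry applied to
  coefficients that are cut off once the energy exceeds `δ` or the integral reaches `ε`; it requires
  no moments of the `ξⱼ`.

* Density (`elem_approx`): for `b ∈ L²` and `u ≥ 0` there are elementary `X` with `⟨b - X⟩ᵤ` small
  in probability. After truncation, `b` is sampled on a grid whose offset is chosen by averaging, and
  continuity of translations in `L²(ℝ)` bounds the average error.

* Completeness (`exists_limit_process`): choosing `Xₙ` with error `8⁻ⁿ` on `[0, n]`, the maximal
  inequality and the Borel–Cantelli lemma make the integrals `Jₙ` converge almost surely, locally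
  uniformly in time. Since the filtration contains the null sets, the limit has an adapted version
  all of whose paths are continuous.

Passing to the limit in the maximal inequality shows that the limit process at time `u` is close in
probability to every elementary integral whose integrand is close to `b` in energy
(`exists_integral`). For simple `b` this gives the elementary formula, and for a sequence of simple
processes whose energy distance to `b` tends to zero in probability it gives convergence.
-/

open MeasureTheory Filter Set

variable {Ω : Type*} {mΩ : MeasurableSpace Ω}

/-- The filtration is augmented: each `F t` contains all `P`-null sets. -/
def AugmentedFiltration (P : Measure Ω) (F : Filtration ℝ mΩ) : Prop :=
  ∀ t : ℝ, ∀ s : Set Ω, MeasurableSet s → P s = 0 → MeasurableSet[F t] s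

/-- `W` is a standard Wiener process with respect to the filtration `F` under `P`. -/
def IsWienerProcess (P : Measure Ω) (F : Filtration ℝ mΩ) (W : ℝ → Ω → ℝ) : Prop :=
  (∀ ω, Continuous fun t => W t ω) ∧
  (∀ ω, W 0 ω = 0) ∧
  Adapted F W ∧
  ∀ s t : ℝ, 0 ≤ s → s ≤ t →
    ProbabilityTheory.Indep
      (MeasurableSpace.comap (fun ω => W t ω - W s ω) inferInstance) (F s) P ∧
    Measure.map (fun ω => W t ω - W s ω) P
      = ProbabilityTheory.gaussianReal 0 (Real.toNNReal (t - s))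

/-- `b` is a simple process with grid `0 = t 0 < t 1 < ⋯ < t n`. -/
def IsSimpleWith (F : Filtration ℝ mΩ) (b : ℝ → Ω → ℝ) (n : ℕ) (t : ℕ → ℝ) : Prop :=
  t 0 = 0 ∧ (∀ i < n, t i < t (i + 1)) ∧
  Measurable[F 0] (b 0) ∧
  (∀ i < n, Measurable[F (t i)] (b (t (i + 1)))) ∧
  ∀ s ω, b s ω =
    Set.indicator ({0} : Set ℝ) (fun _ => b 0 ω) s +
      ∑ i ∈ Finset.range n,
        Set.indicator (Set.Ioc (t i) (t (i + 1))) (fun _ => b (t (i + 1)) ω) s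

/-- `b` is a simple process. -/
def IsSimpleProcess (F : Filtration ℝ mΩ) (b : ℝ → Ω → ℝ) : Prop :=
  ∃ n t, IsSimpleWith F b n t

/-- `b ∈ L²`: measurable, adapted, and pathwise locally square integrable a.s. -/
def MemL2 (P : Measure Ω) (F : Filtration ℝ mΩ) (b : ℝ → Ω → ℝ) : Prop :=
  Measurable (Function.uncurry b) ∧ Adapted F b ∧
  ∀ t : ℝ, 0 ≤ t →
    ∀ᵐ ω ∂P, (∫⁻ s in Set.Ioc (0 : ℝ) t, ENNReal.ofReal ((b s ω) ^ 2)) < ⊤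

/-- `b ∈ H²`: measurable, adapted, locally square integrable in expectation. -/
def MemH2 (P : Measure Ω) (F : Filtration ℝ mΩ) (b : ℝ → Ω → ℝ) : Prop :=
  Measurable (Function.uncurry b) ∧ Adapted F b ∧
  ∀ t : ℝ, 0 ≤ t →
    (∫⁻ ω, ∫⁻ s in Set.Ioc (0 : ℝ) t, ENNReal.ofReal ((b s ω) ^ 2) ∂volume ∂P) < ⊤

/-- Elementary stochastic integral `∑ b(tᵢ)(W(tᵢ) − W(tᵢ₋₁))` of a simple process. -/
def ElemInt (W : ℝ → Ω → ℝ) (b : ℝ → Ω → ℝ) (n : ℕ) (t : ℕ → ℝ) (ω : Ω) : ℝ :=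
  ∑ i ∈ Finset.range n, b (t (i + 1)) ω * (W (t (i + 1)) ω - W (t i) ω)

/-- `I` is a stochastic integral mapping: it sends `L²` into the adapted continuous
processes, computes integrals of simple processes by the elementary formula, and is
continuous with respect to convergence in probability of the time integrals. -/
def IsStochasticIntegralMap (P : Measure Ω) (F : Filtration ℝ mΩ) (W : ℝ → Ω → ℝ)
    (I : (ℝ → Ω → ℝ) → ℝ → Ω → ℝ) : Prop :=
  (∀ b, MemL2 P F b → Adapted F (I b) ∧ ∀ ω, Continuous fun s => I b s ω) ∧
  (∀ b n t, MemL2 P F b → IsSimpleWith F b n t → ∀ u : ℝ, t n ≤ u →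
      ∀ᵐ ω ∂P, I b u ω = ElemInt W b n t ω) ∧
  (∀ u : ℝ, 0 ≤ u → ∀ b, MemL2 P F b → ∀ bs : ℕ → ℝ → Ω → ℝ,
      (∀ k, IsSimpleProcess F (bs k) ∧ MemH2 P F (bs k)) →
      TendstoInMeasure P
        (fun k ω => ∫ s in Set.Ioc (0 : ℝ) u, (b s ω - bs k s ω) ^ 2) atTop
        (fun _ => (0 : ℝ)) →
      TendstoInMeasure P (fun k ω => I (bs k) u ω) atTop (fun ω => I b u ω))

section StochasticIntegral
open ProbabilityTheory Topology
open scoped ENNReal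

/-! ### Discrete stochastic integrals -/

/-- Itô isometry in discrete time: if each `X i` is centred with variance `v i` and independent of
the past `G i`, while `c i` is `G i`-measurable, then the cross terms of the squared sum vanish.
Boundedness is only asked of `c i ^ 2 * v i`, so that steps of variance zero cost nothing. -/
lemma ito_isometry_discrete (P : Measure Ω) [IsProbabilityMeasure P]
    (G : ℕ → MeasurableSpace Ω) (hGm : Monotone G) (hG : ∀ i, G i ≤ mΩ)
    (X : ℕ → Ω → ℝ) (hXm : ∀ i, Measurable[G (i + 1)] (X i))
    (hXi : ∀ i, Indep (MeasurableSpace.comap (X i) inferInstance) (G i) P)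
    (v : ℕ → ℝ) (hv0 : ∀ i, 0 ≤ v i) (hX2 : ∀ i, MemLp (X i) 2 P) (h0 : ∀ i, ∫ ω, X i ω ∂P = 0)
    (hv : ∀ i, ∫ ω, X i ω ^ 2 ∂P = v i)
    (c : ℕ → Ω → ℝ) (hc : ∀ i, Measurable[G i] (c i))
    (hcb : ∀ i, ∃ C : ℝ, ∀ ω, c i ω ^ 2 * v i ≤ C) (n : ℕ) :
    MemLp (fun ω => ∑ i ∈ Finset.range n, c i ω * X i ω) 2 P ∧
      ∫ ω, (∑ i ∈ Finset.range n, c i ω * X i ω) ^ 2 ∂P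
        = ∫ ω, ∑ i ∈ Finset.range n, c i ω ^ 2 * v i ∂P := by
  have hcm : ∀ i, Measurable (c i) := fun i => (hc i).mono (hG i) le_rfl
  have hXm' : ∀ i, Measurable (X i) := fun i => (hXm i).mono (hG _) le_rfl
  have hind : ∀ i (Z : Ω → ℝ), Measurable[G i] Z → IndepFun Z (X i) P := by
    intro i Z hZ
    rw [IndepFun_iff_Indep]
    exact (indep_of_indep_of_le_right (hXi i) hZ.comap_le).symm
  have hcvint : ∀ i, Integrable (fun ω => c i ω ^ 2 * v i) P := by
    intro i
    obtain ⟨C, hC⟩ := hcb i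
    refine Integrable.of_bound (C := C) (by fun_prop) (ae_of_all _ fun ω => ?_)
    rw [Real.norm_of_nonneg (mul_nonneg (sq_nonneg _) (hv0 i))]
    exact hC ω
  have hX2i : ∀ i, Integrable (fun ω => X i ω ^ 2) P := fun i => (hX2 i).integrable_sq
  have hsqi : ∀ i, ∫⁻ ω, ENNReal.ofReal (c i ω ^ 2 * X i ω ^ 2) ∂P
      = ∫⁻ ω, ENNReal.ofReal (c i ω ^ 2 * v i) ∂P := by
    intro i
    have h1 : IndepFun (fun ω => ENNReal.ofReal (c i ω ^ 2)) (fun ω => ENNReal.ofReal (X i ω ^ 2)) P :=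
      (hind i (c i) (hc i)).comp (φ := fun x : ℝ => ENNReal.ofReal (x ^ 2))
        (ψ := fun x : ℝ => ENNReal.ofReal (x ^ 2)) (by fun_prop) (by fun_prop)
    have h2 := lintegral_mul_eq_lintegral_mul_lintegral_of_indepFun (μ := P)
      (((hcm i).pow_const 2).ennreal_ofReal) (((hXm' i).pow_const 2).ennreal_ofReal) h1
    simp only [Pi.mul_apply] at h2
    simp_rw [ENNReal.ofReal_mul (sq_nonneg _)]
    rw [h2, lintegral_mul_const _ (((hcm i).pow_const 2).ennreal_ofReal),
      ← ofReal_integral_eq_lintegral_ofReal (hX2i i) (ae_of_all _ fun ω => sq_nonneg _), hv]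
  have hcX : ∀ i, MemLp (fun ω => c i ω * X i ω) 2 P := by
    intro i
    rw [memLp_two_iff_integrable_sq (by fun_prop)]
    simp_rw [mul_pow]
    refine ⟨by fun_prop, ?_⟩
    rw [hasFiniteIntegral_iff_ofReal (ae_of_all _ fun ω => by positivity), hsqi,
      ← hasFiniteIntegral_iff_ofReal (ae_of_all _ fun ω => mul_nonneg (sq_nonneg _) (hv0 i))]
    exact (hcvint i).2
  have hcX2 : ∀ i, ∫ ω, (c i ω * X i ω) ^ 2 ∂P = ∫ ω, c i ω ^ 2 * v i ∂P := by
    intro i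
    simp_rw [mul_pow]
    rw [integral_eq_lintegral_of_nonneg_ae (ae_of_all _ fun ω => by positivity) (by fun_prop), hsqi,
      ← integral_eq_lintegral_of_nonneg_ae
        (ae_of_all _ fun ω => mul_nonneg (sq_nonneg _) (hv0 i)) (by fun_prop)]
  induction n with
  | zero => simp
  | succ n ih =>
    obtain ⟨ihm, ihe⟩ := ih
    set M : Ω → ℝ := fun ω => ∑ i ∈ Finset.range n, c i ω * X i ω with hM
    have hMG : Measurable[G n] M := by
      refine Finset.measurable_sum _ fun i hi => ?_
      have hi' := Finset.mem_range.1 hi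
      exact ((hc i).mono (hGm hi'.le) le_rfl).mul ((hXm i).mono (hGm hi') le_rfl)
    have hcross : ∫ ω, M ω * (c n ω * X n ω) ∂P = 0 := by
      have h1 := hind n _ (hMG.mul (hc n))
      have h2 := h1.integral_mul_eq_mul_integral
        ((hMG.mul (hc n)).mono (hG n) le_rfl).aestronglyMeasurable (hXm' n).aestronglyMeasurable
      rw [h0, mul_zero] at h2
      rw [← h2]
      exact integral_congr_ae (ae_of_all _ fun ω => by simp [mul_assoc])
    have hint : Integrable (fun ω => M ω * (c n ω * X n ω)) P := ihm.integrable_mul (hcX n)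
    simp_rw [Finset.sum_range_succ]
    refine ⟨ihm.add (hcX n), ?_⟩
    have e : ∀ ω, (∑ i ∈ Finset.range n, c i ω * X i ω + c n ω * X n ω) ^ 2
        = (M ω ^ 2 + 2 * (M ω * (c n ω * X n ω))) + (c n ω * X n ω) ^ 2 := by
      intro ω; simp only [hM]; ring
    simp_rw [e]
    have hint' : Integrable (fun ω => M ω ^ 2 + 2 * (M ω * (c n ω * X n ω))) P :=
      ihm.integrable_sq.add (hint.const_mul 2)
    rw [integral_add hint' (hcX n).integrable_sq,
      integral_add ihm.integrable_sq (hint.const_mul 2), integral_const_mul, hcross, ihe, hcX2,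
      integral_add (integrable_finsetSum _ fun i _ => hcvint i) (hcvint n)]
    simp

/-- Maximal inequality in probability for discrete stochastic integrals, without any integrability of
the coefficients `c i`. Cutting the coefficients off as soon as the accumulated variance exceeds `δ`
or the sum reaches `ε` gives a sum `N` with second moment at most `δ`, and Chebyshev's inequality
for `N` replaces both Doob's inequality and optional stopping. -/
lemma maximal_ineq_discrete (P : Measure Ω) [IsProbabilityMeasure P]
    (G : ℕ → MeasurableSpace Ω) (hGm : Monotone G) (hG : ∀ i, G i ≤ mΩ)
    (X : ℕ → Ω → ℝ) (hXm : ∀ i, Measurable[G (i + 1)] (X i))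
    (hXi : ∀ i, Indep (MeasurableSpace.comap (X i) inferInstance) (G i) P)
    (v : ℕ → ℝ) (hv0 : ∀ i, 0 ≤ v i) (hX2 : ∀ i, MemLp (X i) 2 P) (h0 : ∀ i, ∫ ω, X i ω ∂P = 0)
    (hv : ∀ i, ∫ ω, X i ω ^ 2 ∂P = v i)
    (c : ℕ → Ω → ℝ) (hc : ∀ i, Measurable[G i] (c i)) (n : ℕ) {ε δ : ℝ} (hε : 0 < ε)
    (hδ : 0 ≤ δ) :
    P {ω | ∃ k ≤ n, ε ≤ |∑ i ∈ Finset.range k, c i ω * X i ω|} ≤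
      ENNReal.ofReal (δ / ε ^ 2) + P {ω | δ < ∑ i ∈ Finset.range n, c i ω ^ 2 * v i} := by
  classical
  set M : ℕ → Ω → ℝ := fun k ω => ∑ i ∈ Finset.range k, c i ω * X i ω with hM
  -- `A k` is known at time `k`: the variance up to and including step `k` is at most `δ`, and the
  -- partial sums up to time `k` stay below `ε`
  set A : ℕ → Set Ω := fun k => {ω | ∑ i ∈ Finset.range (k + 1), c i ω ^ 2 * v i ≤ δ} ∩
    ⋂ j ∈ Finset.range (k + 1), {ω | |M j ω| < ε} with hA
  set d : ℕ → Ω → ℝ := fun k => (A k).indicator (c k) with hd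
  have hMm : ∀ k, Measurable[G k] (M k) := by
    intro k
    refine Finset.measurable_sum _ fun i hi => ?_
    have hi' := Finset.mem_range.1 hi
    exact ((hc i).mono (hGm hi'.le) le_rfl).mul ((hXm i).mono (hGm hi') le_rfl)
  have hAm : ∀ k, MeasurableSet[G k] (A k) := by
    intro k
    refine MeasurableSet.inter ?_ ?_
    · suffices h : Measurable[G k] fun ω => ∑ i ∈ Finset.range (k + 1), c i ω ^ 2 * v i from
        h measurableSet_Iic
      refine Finset.measurable_sum _ fun i hi => ?_
      exact (((hc i).mono (hGm (Nat.lt_succ_iff.1 (Finset.mem_range.1 hi))) le_rfl).pow_const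
        2).mul_const _
    · refine Finset.measurableSet_biInter _ fun j hj => ?_
      suffices h : Measurable[G k] fun ω => |M j ω| from h measurableSet_Iio
      exact measurable_abs.comp
        ((hMm j).mono (hGm (Nat.lt_succ_iff.1 (Finset.mem_range.1 hj))) le_rfl)
  have hdm : ∀ k, Measurable[G k] (d k) := fun k => (hc k).indicator (hAm k)
  have hdle : ∀ k ω, d k ω ^ 2 * v k ≤ c k ω ^ 2 * v k := by
    intro k ω
    by_cases h : ω ∈ A k
    · simp [hd, h]
    · simp only [hd, Set.indicator_of_notMem h]
      have := mul_nonneg (sq_nonneg (c k ω)) (hv0 k)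
      simpa using this
  have hsum : ∀ k ω, ∑ i ∈ Finset.range k, d i ω ^ 2 * v i ≤ δ := by
    intro k ω
    induction k with
    | zero => simpa using hδ
    | succ k ih =>
      by_cases h : ω ∈ A k
      · exact (Finset.sum_le_sum fun i _ => hdle i ω).trans h.1
      · rw [Finset.sum_range_succ]
        simpa [hd, Set.indicator_of_notMem h] using ih
  obtain ⟨hmem, hiso⟩ := ito_isometry_discrete P G hGm hG X hXm hXi v hv0 hX2 h0 hv d hdm
    (fun k => ⟨δ, fun ω => (Finset.single_le_sum (f := fun i => d i ω ^ 2 * v i)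
      (fun i _ => mul_nonneg (sq_nonneg _) (hv0 i)) (Finset.self_mem_range_succ k)).trans
        (hsum (k + 1) ω)⟩) n
  set N : Ω → ℝ := fun ω => ∑ i ∈ Finset.range n, d i ω * X i ω with hN
  have hle : ∫ ω, N ω ^ 2 ∂P ≤ δ := by
    rw [hiso]
    have : ∫ ω, ∑ i ∈ Finset.range n, d i ω ^ 2 * v i ∂P ≤ ∫ ω, δ ∂P := by
      refine integral_mono_of_nonneg (ae_of_all _ fun ω => ?_) (integrable_const _)
        (ae_of_all _ fun ω => hsum n ω)
      exact Finset.sum_nonneg fun i _ => mul_nonneg (sq_nonneg _) (hv0 i)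
    simpa using this
  have hcheb : P {ω | ε ≤ |N ω|} ≤ ENNReal.ofReal (δ / ε ^ 2) := by
    have h1 := mul_meas_ge_le_integral_of_nonneg (μ := P) (f := fun ω => N ω ^ 2)
      (ae_of_all _ fun ω => sq_nonneg _) hmem.integrable_sq (ε ^ 2)
    have h2 : {ω | ε ≤ |N ω|} = {ω | ε ^ 2 ≤ N ω ^ 2} := by
      ext ω
      simp only [mem_ofPred_eq]
      rw [sq_le_sq, abs_of_pos hε]
    rw [h2, ← ENNReal.ofReal_toReal (measure_ne_top P {ω | ε ^ 2 ≤ N ω ^ 2})]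
    refine ENNReal.ofReal_le_ofReal ?_
    rw [le_div_iff₀ (by positivity), mul_comm]
    exact h1.trans hle
  have hsub : {ω | ∃ k ≤ n, ε ≤ |M k ω|} ⊆
      {ω | ε ≤ |N ω|} ∪ {ω | δ < ∑ i ∈ Finset.range n, c i ω ^ 2 * v i} := by
    intro ω hω
    by_cases hs : δ < ∑ i ∈ Finset.range n, c i ω ^ 2 * v i
    · exact Or.inr hs
    left
    push Not at hs
    have hex : ∃ k, k ≤ n ∧ ε ≤ |M k ω| := hω
    -- at the first time `k` at which the sum reaches `ε`, the truncated sum freezes at `M k`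
    obtain ⟨hkn, hkε⟩ := Nat.find_spec hex
    set k := Nat.find hex with hk
    have hmin : ∀ j < k, |M j ω| < ε := by
      intro j hj
      by_contra hcon
      exact Nat.find_min hex hj ⟨hj.le.trans hkn, not_lt.1 hcon⟩
    have hin : ∀ i < k, ω ∈ A i := by
      intro i hi
      refine ⟨?_, ?_⟩
      · refine le_trans (Finset.sum_le_sum_of_subset_of_nonneg ?_ ?_) hs
        · exact Finset.range_subset_range.2 (by omega)
        · exact fun i _ _ => mul_nonneg (sq_nonneg _) (hv0 i)
      · simp only [Finset.mem_range, mem_iInter, mem_ofPred_eq]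
        exact fun j hj => hmin j (by omega)
    have hout : ∀ i, k ≤ i → ω ∉ A i := by
      intro i hi hmemA
      have := hmemA.2
      simp only [Finset.mem_range, mem_iInter, mem_ofPred_eq] at this
      exact absurd (this k (by omega)) (not_lt.2 hkε)
    have hNk : N ω = M k ω := by
      simp only [hN, hM]
      rw [← Finset.sum_subset (Finset.range_subset_range.2 hkn)]
      · exact Finset.sum_congr rfl fun i hi => by
          simp [hd, hin i (Finset.mem_range.1 hi)]
      · intro i _ hi
        simp [hd, hout i (by simpa using hi)]
    change ε ≤ |N ω|
    rw [hNk]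
    exact hkε
  calc _ ≤ _ := measure_mono hsub
    _ ≤ _ := measure_union_le _ _
    _ ≤ _ := by gcongr

/-! ### Elementary integrands and the maximal inequality -/

/-- A finite grid on `[0, u]`, extended to all indices by repeating its last point, none of whose cells
contains a nonnegative point of `S` in its interior. Points of `S` beyond `u` are allowed. -/
lemma exists_grid (S : Finset ℝ) {u : ℝ} (hu : 0 ≤ u) :
    ∃ (N : ℕ) (r : ℕ → ℝ), Monotone r ∧ r 0 = 0 ∧ r N = u ∧
      (∀ x ∈ S, 0 ≤ x → ∀ i, x ≤ r i ∨ r (i + 1) ≤ x) := by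
  classical
  set T : Finset ℝ := (insert 0 (insert u S)).filter fun x => 0 ≤ x ∧ x ≤ u with hT
  have h0T : (0 : ℝ) ∈ T := by simp [hT, hu]
  have huT : u ∈ T := by simp [hT, hu]
  obtain ⟨m, hm⟩ : ∃ m, T.card = m + 1 :=
    Nat.exists_eq_succ_of_ne_zero (Finset.card_ne_zero_of_mem h0T)
  set e := T.orderEmbOfFin hm with he
  have heT : ∀ i, 0 ≤ e i ∧ e i ≤ u := fun i => by
    have h1 := T.orderEmbOfFin_mem hm i
    exact (Finset.mem_filter.1 h1).2
  have hsurj : ∀ x ∈ T, ∃ j, e j = x := by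
    intro x hx
    have : x ∈ Set.range e := by rw [he, Finset.range_orderEmbOfFin]; exact hx
    exact this
  set r : ℕ → ℝ := fun i => e ⟨min i m, by omega⟩ with hr
  have hmono : Monotone r := by
    intro i j hij
    refine e.monotone ?_
    simp only [Fin.mk_le_mk]
    omega
  refine ⟨m, r, hmono, ?_, ?_, ?_⟩
  · obtain ⟨j, hj⟩ := hsurj 0 h0T
    refine le_antisymm ?_ (heT _).1
    rw [← hj]
    exact e.monotone (by simp)
  · obtain ⟨j, hj⟩ := hsurj u huT
    refine le_antisymm (heT _).2 ?_
    rw [← hj]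
    refine e.monotone ?_
    simp only [Fin.le_def]
    omega
  · intro x hx hx0 i
    by_cases hxu : x ≤ u
    · obtain ⟨j, hj⟩ := hsurj x (by simp [hT, hx, hx0, hxu])
      rw [← hj]
      by_cases hji : (j : ℕ) ≤ i
      · left
        refine e.monotone ?_
        simp only [Fin.le_def]
        omega
      · right
        refine e.monotone ?_
        simp only [Fin.le_def]
        omega
    · right
      exact (heT _).2.trans (not_le.1 hxu).le

lemma grid_hits {r : ℕ → ℝ} {N : ℕ} {u x : ℝ} (h0 : r 0 = 0) (hN : r N = u)
    (hgap : ∀ i, x ≤ r i ∨ r (i + 1) ≤ x) (hx0 : 0 ≤ x) (hxu : x ≤ u) : ∃ k ≤ N, r k = x := by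
  classical
  have hex : ∃ k, x ≤ r k := ⟨N, by rw [hN]; exact hxu⟩
  refine ⟨Nat.find hex, Nat.find_min' hex (by rw [hN]; exact hxu), ?_⟩
  refine le_antisymm ?_ (Nat.find_spec hex)
  rcases hk : Nat.find hex with _ | k
  · rw [h0]; exact hx0
  · have := Nat.find_min hex (m := k) (by omega)
    exact (hgap k).resolve_left this

/-- The pathwise energy `∫₀ᵘ X(s)² ds`, valued in `ℝ≥0∞` so that it is meaningful without any
integrability assumption. -/
noncomputable def sqInt (X : ℝ → Ω → ℝ) (u : ℝ) (ω : Ω) : ℝ≥0∞ :=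
  ∫⁻ s in Set.Ioc (0 : ℝ) u, ENNReal.ofReal ((X s ω) ^ 2)

/-- `X = ∑ⱼ ξⱼ 1_{(pⱼ, qⱼ]}` is an elementary integrand, with `ξⱼ` known at time `pⱼ ≥ 0`, and `J` is
its integral process `J(s) = ∑ⱼ ξⱼ (W(qⱼ ∧ s) − W(pⱼ ∧ s))`. The intervals may overlap, which makes
closure under subtraction immediate; `X` and `J` come from the same representation, so that
no independence of the representation has to be proved. -/
def IsElem (F : Filtration ℝ mΩ) (W : ℝ → Ω → ℝ) (X J : ℝ → Ω → ℝ) : Prop :=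
  ∃ (ι : Type) (_ : Fintype ι) (p q : ι → ℝ) (ξ : ι → Ω → ℝ),
    (∀ j, 0 ≤ p j ∧ p j ≤ q j ∧ Measurable[F (p j)] (ξ j)) ∧
    (∀ s ω, X s ω = ∑ j, (Set.Ioc (p j) (q j)).indicator (fun _ => ξ j ω) s) ∧
    (∀ s ω, J s ω = ∑ j, ξ j ω * (W (min (q j) s) ω - W (min (p j) s) ω))

lemma IsElem.sub {F : Filtration ℝ mΩ} {W X J X' J' : ℝ → Ω → ℝ} (h : IsElem F W X J)
    (h' : IsElem F W X' J') :
    IsElem F W (fun s ω => X s ω - X' s ω) (fun s ω => J s ω - J' s ω) := by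
  obtain ⟨ι, _, p, q, ξ, h1, h2, h3⟩ := h
  obtain ⟨ι', _, p', q', ξ', h1', h2', h3'⟩ := h'
  refine ⟨ι ⊕ ι', inferInstance, Sum.elim p p', Sum.elim q q', Sum.elim ξ (fun j => -ξ' j),
    ?_, ?_, ?_⟩
  · rintro (j | j)
    · exact h1 j
    · exact ⟨(h1' j).1, (h1' j).2.1, (h1' j).2.2.neg⟩
  · intro s ω
    simp only [h2, h2', Fintype.sum_sum_type, Sum.elim_inl, Sum.elim_inr, Pi.neg_apply]
    rw [sub_eq_add_neg, ← Finset.sum_neg_distrib]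
    congr 1
    refine Finset.sum_congr rfl fun j _ => ?_
    by_cases hs : s ∈ Ioc (p' j) (q' j) <;> simp [hs]
  · intro s ω
    simp only [h3, h3', Fintype.sum_sum_type, Sum.elim_inl, Sum.elim_inr, Pi.neg_apply]
    rw [sub_eq_add_neg, ← Finset.sum_neg_distrib]
    simp

section
variable {P : Measure Ω} {F : Filtration ℝ mΩ} {W : ℝ → Ω → ℝ}

lemma IsElem.adapted (hW : IsWienerProcess P F W) {X J : ℝ → Ω → ℝ} (h : IsElem F W X J) :
    Adapted F J := by
  obtain ⟨ι, _, p, q, ξ, h1, h2, h3⟩ := h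
  intro s
  rw [show J s = fun ω => ∑ j, ξ j ω * (W (min (q j) s) ω - W (min (p j) s) ω) from
    funext (h3 s)]
  refine Finset.measurable_sum _ fun j _ => ?_
  rcases le_total (p j) s with hs | hs
  · refine ((h1 j).2.2.mono (F.mono hs) le_rfl).mul (Measurable.sub ?_ ?_)
    · exact (hW.2.2.1 _).mono (F.mono (min_le_right _ _)) le_rfl
    · exact (hW.2.2.1 _).mono (F.mono (min_le_right _ _)) le_rfl
  · simp only [min_eq_right hs, min_eq_right (hs.trans (h1 j).2.1), sub_self, mul_zero]
    exact measurable_const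

lemma IsElem.continuous (hW : IsWienerProcess P F W) {X J : ℝ → Ω → ℝ} (h : IsElem F W X J)
    (ω : Ω) : Continuous fun s => J s ω := by
  obtain ⟨ι, _, p, q, ξ, h1, h2, h3⟩ := h
  simp_rw [h3]
  have hc := hW.1 ω
  refine continuous_finsetSum _ fun j _ => continuous_const.mul (Continuous.sub ?_ ?_)
  · exact hc.comp (continuous_const.min continuous_id)
  · exact hc.comp (continuous_const.min continuous_id)

lemma IsElem.eq_zero {X J : ℝ → Ω → ℝ} (h : IsElem F W X J) {s : ℝ} (hs : s ≤ 0) (ω : Ω) :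
    J s ω = 0 := by
  obtain ⟨ι, _, p, q, ξ, h1, h2, h3⟩ := h
  rw [h3]
  refine Finset.sum_eq_zero fun j _ => ?_
  have hp := hs.trans (h1 j).1
  rw [min_eq_right hp, min_eq_right (hp.trans (h1 j).2.1), sub_self, mul_zero]

lemma IsElem.measurable {X J : ℝ → Ω → ℝ} (h : IsElem F W X J) :
    Measurable (Function.uncurry X) := by
  obtain ⟨ι, _, p, q, ξ, h1, h2, h3⟩ := h
  have : Function.uncurry X = fun x : ℝ × Ω =>
      ∑ j, (Prod.fst ⁻¹' (Ioc (p j) (q j))).indicator (fun x : ℝ × Ω => ξ j x.2) x := by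
    ext ⟨s, ω⟩
    simp only [Function.uncurry_apply_pair, h2]
    rfl
  rw [this]
  refine Finset.measurable_sum _ fun j _ => ?_
  refine Measurable.indicator ?_ (measurable_fst measurableSet_Ioc)
  exact ((h1 j).2.2.mono (F.le _) le_rfl).comp measurable_snd

lemma wiener_moments (hW : IsWienerProcess P F W) {s t : ℝ} (hs : 0 ≤ s) (hst : s ≤ t) :
    MemLp (fun ω => W t ω - W s ω) 2 P ∧ ∫ ω, (W t ω - W s ω) ∂P = 0 ∧
      ∫ ω, (W t ω - W s ω) ^ 2 ∂P = t - s := by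
  have hlaw := (hW.2.2.2 s t hs hst).2
  have hm : Measurable fun ω => W t ω - W s ω :=
    ((hW.2.2.1 t).mono (F.le _) le_rfl).sub ((hW.2.2.1 s).mono (F.le _) le_rfl)
  refine ⟨?_, ?_, ?_⟩
  · have h := memLp_id_gaussianReal (μ := 0) (v := Real.toNNReal (t - s)) 2
    rw [← hlaw, memLp_map_measure_iff (by fun_prop) hm.aemeasurable] at h
    exact h
  · have h := integral_map (μ := P) hm.aemeasurable (f := fun x : ℝ => x) (by fun_prop)
    rw [hlaw, integral_id_gaussianReal] at h
    exact h.symm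
  · have h := integral_map (μ := P) hm.aemeasurable (f := fun x : ℝ => x ^ 2) (by fun_prop)
    rw [← h, hlaw]
    have h2 := variance_fun_id_gaussianReal (μ := 0) (v := Real.toNNReal (t - s))
    rw [variance_of_integral_eq_zero (by fun_prop) integral_id_gaussianReal] at h2
    rw [h2, Real.coe_toNNReal _ (sub_nonneg.2 hst)]

/-- The maximal inequality for an elementary integral over finitely many times. On a grid containing
these times and all endpoints, `X` is constant on the cells, so the discrete inequality applies. -/
lemma elem_max_finite [IsProbabilityMeasure P] (hW : IsWienerProcess P F W) {X J : ℝ → Ω → ℝ}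
    (h : IsElem F W X J) {u : ℝ} (hu : 0 ≤ u) (D : Finset ℝ) (hD : ∀ d ∈ D, 0 ≤ d ∧ d ≤ u)
    {ε δ : ℝ} (hε : 0 < ε) (hδ : 0 ≤ δ) :
    P {ω | ∃ d ∈ D, ε ≤ |J d ω|} ≤
      ENNReal.ofReal (δ / ε ^ 2) + P {ω | ENNReal.ofReal δ < sqInt X u ω} := by
  classical
  obtain ⟨ι, _, p, q, ξ, h1, h2, h3⟩ := h
  obtain ⟨N, r, hr, hr0, hrN, hgap⟩ :=
    exists_grid (D ∪ (Finset.univ.image p ∪ Finset.univ.image q)) hu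
  have hgp : ∀ j i, p j ≤ r i ∨ r (i + 1) ≤ p j := fun j i => hgap _ (by simp) (h1 j).1 i
  have hgq : ∀ j i, q j ≤ r i ∨ r (i + 1) ≤ q j := fun j i =>
    hgap _ (by simp) ((h1 j).1.trans (h1 j).2.1) i
  have hrpos : ∀ i, 0 ≤ r i := fun i => hr0 ▸ hr (Nat.zero_le i)
  have hrs : ∀ i, r i ≤ r (i + 1) := fun i => hr (Nat.le_succ i)
  have hJ : ∀ k ω, J (r k) ω =
      ∑ i ∈ Finset.range k, X (r (i + 1)) ω * (W (r (i + 1)) ω - W (r i) ω) := by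
    intro k ω
    simp_rw [h3, h2, Finset.sum_mul]
    rw [Finset.sum_comm]
    refine Finset.sum_congr rfl fun j _ => ?_
    have hp0 := (h1 j).1
    have hpq := (h1 j).2.1
    induction k with
    | zero => simp [hr0, min_eq_right hp0, min_eq_right (hp0.trans hpq)]
    | succ k ih =>
      rw [Finset.sum_range_succ, ← ih]
      rcases hgp j k with hp | hp <;> rcases hgq j k with hq | hq
      · rw [min_eq_left hp, min_eq_left hq, min_eq_left (hp.trans (hrs k)),
          min_eq_left (hq.trans (hrs k))]
        by_cases hs : r (k + 1) ∈ Ioc (p j) (q j)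
        · have : r (k + 1) = r k := le_antisymm (hs.2.trans hq) (hrs k)
          simp [this]
        · simp [hs]
      · rw [min_eq_left hp, min_eq_right hq, min_eq_left (hp.trans (hrs k)),
          min_eq_right ((hrs k).trans hq)]
        by_cases hs : r (k + 1) ∈ Ioc (p j) (q j)
        · simp [hs]; ring
        · have h5 : r (k + 1) ≤ p j := by
            by_contra hcon
            exact hs ⟨not_le.1 hcon, hq⟩
          have : r (k + 1) = r k := le_antisymm (h5.trans hp) (hrs k)
          simp [this, le_antisymm (this ▸ h5) hp]
      · have e1 : q j = r k := le_antisymm hq ((hrs k).trans (hp.trans hpq))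
        have e2 : r (k + 1) = r k := le_antisymm (hp.trans (hpq.trans hq)) (hrs k)
        simp [e2]
      · rw [min_eq_right hp, min_eq_right hq, min_eq_right ((hrs k).trans hp),
          min_eq_right ((hrs k).trans hq)]
        have hs : r (k + 1) ∉ Ioc (p j) (q j) := fun hs => absurd hs.1 (not_lt.2 hp)
        simp [hs]
  have hQ : ∀ k ω, sqInt X (r k) ω =
      ENNReal.ofReal (∑ i ∈ Finset.range k, X (r (i + 1)) ω ^ 2 * (r (i + 1) - r i)) := by
    intro k ω
    induction k with
    | zero => simp [sqInt, hr0]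
    | succ k ih =>
      have hnn : ∀ i, 0 ≤ X (r (i + 1)) ω ^ 2 * (r (i + 1) - r i) := fun i =>
        mul_nonneg (sq_nonneg _) (sub_nonneg.2 (hrs i))
      rw [Finset.sum_range_succ, ENNReal.ofReal_add (Finset.sum_nonneg fun i _ => hnn i) (hnn k),
        ← ih]
      simp only [sqInt]
      rw [← Ioc_union_Ioc_eq_Ioc (hrpos k) (hrs k), lintegral_union measurableSet_Ioc
        (Ioc_disjoint_Ioc_of_le le_rfl)]
      congr 1
      have hcst : ∀ s ∈ Ioc (r k) (r (k + 1)),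
          ENNReal.ofReal (X s ω ^ 2) = ENNReal.ofReal (X (r (k + 1)) ω ^ 2) := by
        intro s hs
        congr 2
        rw [h2, h2]
        refine Finset.sum_congr rfl fun j _ => ?_
        have : s ∈ Ioc (p j) (q j) ↔ r (k + 1) ∈ Ioc (p j) (q j) := by
          constructor
          · intro hm
            exact ⟨hm.1.trans_le hs.2,
              (hgq j k).resolve_left (not_le.2 (hs.1.trans_le hm.2))⟩
          · intro hm
            exact ⟨((hgp j k).resolve_right (not_le.2 hm.1)).trans_lt hs.1, hs.2.trans hm.2⟩
        by_cases hm : s ∈ Ioc (p j) (q j)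
        · simp [hm, this.1 hm]
        · rw [indicator_of_notMem hm, indicator_of_notMem (mt this.2 hm)]
      rw [setLIntegral_congr_fun measurableSet_Ioc hcst, setLIntegral_const, Real.volume_Ioc,
        ENNReal.ofReal_mul (sq_nonneg _)]
  have key := maximal_ineq_discrete P (fun i => F (r i)) (fun i j hij => F.mono (hr hij))
    (fun i => F.le _) (fun i ω => W (r (i + 1)) ω - W (r i) ω)
    (fun i => (hW.2.2.1 _).sub ((hW.2.2.1 _).mono (F.mono (hrs i)) le_rfl))
    (fun i => (hW.2.2.2 _ _ (hrpos i) (hrs i)).1) (fun i => r (i + 1) - r i)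
    (fun i => sub_nonneg.2 (hrs i)) (fun i => (wiener_moments hW (hrpos i) (hrs i)).1)
    (fun i => (wiener_moments hW (hrpos i) (hrs i)).2.1)
    (fun i => (wiener_moments hW (hrpos i) (hrs i)).2.2) (fun i ω => X (r (i + 1)) ω)
    (fun i => by
      rw [show (fun ω => X (r (i + 1)) ω) =
        fun ω => ∑ j, (Set.Ioc (p j) (q j)).indicator (fun _ => ξ j ω) (r (i + 1)) from
          funext (h2 _)]
      refine Finset.measurable_sum _ fun j _ => ?_
      by_cases hs : r (i + 1) ∈ Ioc (p j) (q j)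
      · simp only [hs, indicator_of_mem]
        exact (h1 j).2.2.mono (F.mono ((hgp j i).resolve_right (not_le.2 hs.1))) le_rfl
      · simp only [hs, not_false_eq_true, indicator_of_notMem]
        exact measurable_const) N hε hδ
  refine le_trans (measure_mono ?_) (key.trans (add_le_add le_rfl (measure_mono ?_)))
  · rintro ω ⟨d, hd, hdε⟩
    obtain ⟨k, hk, rfl⟩ := grid_hits hr0 hrN (hgap d (by simp [hd]) (hD d hd).1) (hD d hd).1
      (hD d hd).2
    refine ⟨k, hk, ?_⟩
    rw [← hJ]
    exact hdε
  · intro ω hω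
    change ENNReal.ofReal δ < sqInt X u ω
    rw [← hrN, hQ]
    exact (ENNReal.ofReal_lt_ofReal_iff_of_nonneg hδ).2 hω

/-- The maximal inequality for an elementary integral over `[0, u]`: by path continuity the supremum
is a monotone limit of maxima over finite sets of times. -/
lemma elem_max [IsProbabilityMeasure P] (hW : IsWienerProcess P F W) {X J : ℝ → Ω → ℝ}
    (h : IsElem F W X J) {u : ℝ} (hu : 0 ≤ u) {ε δ : ℝ} (hε : 0 < ε) (hδ : 0 ≤ δ) :
    P {ω | ∃ s ∈ Icc 0 u, ε < |J s ω|} ≤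
      ENNReal.ofReal (δ / ε ^ 2) + P {ω | ENNReal.ofReal δ < sqInt X u ω} := by
  classical
  have : Nonempty (Icc 0 u) := ⟨⟨0, le_rfl, hu⟩⟩
  set d : ℕ → Icc 0 u := TopologicalSpace.denseSeq (Icc 0 u) with hd
  have hdd : DenseRange d := TopologicalSpace.denseRange_denseSeq _
  set A : ℕ → Set Ω := fun n => {ω | ∃ x ∈ (Finset.range n).image fun i => (d i : ℝ), ε ≤ |J x ω|}
    with hA
  have hmono : Monotone A := by
    rintro m n hmn ω ⟨x, hx, hxe⟩
    exact ⟨x, Finset.image_subset_image (Finset.range_subset_range.2 hmn) hx, hxe⟩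
  have hsub : {ω | ∃ s ∈ Icc 0 u, ε < |J s ω|} ⊆ ⋃ n, A n := by
    rintro ω ⟨s, hs, hsε⟩
    have hopen : IsOpen {x : Icc 0 u | ε < |J x ω|} :=
      isOpen_lt continuous_const ((h.continuous hW ω).comp continuous_subtype_val).abs
    obtain ⟨i, hi⟩ := hdd.exists_mem_open hopen ⟨⟨s, hs⟩, hsε⟩
    refine mem_iUnion.2 ⟨i + 1, (d i : ℝ), ?_, hi.le⟩
    exact Finset.mem_image.2 ⟨i, by simp, rfl⟩
  refine (measure_mono hsub).trans ?_
  rw [hmono.measure_iUnion]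
  refine iSup_le fun n => elem_max_finite hW h hu _ ?_ hε hδ
  intro x hx
  obtain ⟨i, _, rfl⟩ := Finset.mem_image.1 hx
  exact (d i).2
end

/-! ### Density of elementary integrands -/

lemma sqInt_triangle {a b c : ℝ → Ω → ℝ} (ha : Measurable (Function.uncurry a))
    (hb : Measurable (Function.uncurry b)) (u : ℝ) (ω : Ω) :
    sqInt (fun s ω => a s ω - c s ω) u ω ≤
      2 * sqInt (fun s ω => a s ω - b s ω) u ω + 2 * sqInt (fun s ω => b s ω - c s ω) u ω := by
  simp only [sqInt]
  have ha' : Measurable fun s => a s ω := ha.comp measurable_prodMk_right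
  have hb' : Measurable fun s => b s ω := hb.comp measurable_prodMk_right
  have hm : Measurable fun s => ENNReal.ofReal ((a s ω - b s ω) ^ 2) := by fun_prop
  have h2 : (2 : ℝ≥0∞) = ENNReal.ofReal 2 := by simp
  rw [← lintegral_const_mul _ hm, ← lintegral_const_mul' _ _ (by simp),
    ← lintegral_add_left (hm.const_mul _)]
  refine lintegral_mono fun s => ?_
  simp only [h2]
  rw [← ENNReal.ofReal_mul (by norm_num), ← ENNReal.ofReal_mul (by norm_num),
    ← ENNReal.ofReal_add (by positivity) (by positivity)]
  refine ENNReal.ofReal_le_ofReal ?_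
  nlinarith [sq_nonneg ((a s ω - b s ω) - (b s ω - c s ω))]

lemma measure_sqInt_triangle (P : Measure Ω) {a b c : ℝ → Ω → ℝ}
    (ha : Measurable (Function.uncurry a))
    (hb : Measurable (Function.uncurry b)) (u : ℝ) {δ : ℝ} (hδ : 0 < δ) :
    P {ω | ENNReal.ofReal δ < sqInt (fun s ω => a s ω - c s ω) u ω} ≤
      P {ω | ENNReal.ofReal (δ / 4) < sqInt (fun s ω => a s ω - b s ω) u ω} +
      P {ω | ENNReal.ofReal (δ / 4) < sqInt (fun s ω => b s ω - c s ω) u ω} := by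
  refine (measure_mono ?_).trans (measure_union_le _ _)
  intro ω hω
  by_contra hcon
  simp only [mem_union, mem_ofPred_eq, not_or, not_lt] at hcon hω
  refine absurd (hω.trans_le (sqInt_triangle (c := c) ha hb u ω)) (not_lt.2 ?_)
  have h2 : (2 : ℝ≥0∞) = ENNReal.ofReal 2 := by simp
  calc _ ≤ 2 * ENNReal.ofReal (δ / 4) + 2 * ENNReal.ofReal (δ / 4) := by
        gcongr
        · exact hcon.1
        · exact hcon.2
    _ = ENNReal.ofReal δ := by
        rw [h2, ← ENNReal.ofReal_mul (by norm_num), ← ENNReal.ofReal_add (by positivity)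
          (by positivity)]
        congr 1; ring

lemma sqInt_symm (a b : ℝ → Ω → ℝ) (u : ℝ) (ω : Ω) :
    sqInt (fun s ω => a s ω - b s ω) u ω = sqInt (fun s ω => b s ω - a s ω) u ω := by
  simp only [sqInt]
  refine lintegral_congr fun s => ?_
  congr 1; ring

lemma measurable_sqInt {X : ℝ → Ω → ℝ} (hX : Measurable (Function.uncurry X)) (u : ℝ) :
    Measurable (sqInt X u) := by
  have : Measurable fun x : ℝ × Ω => ENNReal.ofReal (Function.uncurry X x ^ 2) := by fun_prop
  exact this.lintegral_prod_left'

/-- Continuity of translations in `L²(ℝ)`, written as an energy. -/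
lemma translation_tendsto {f : ℝ → ℝ} (hf : MemLp f 2 volume) :
    Tendsto (fun h => ∫⁻ r, ENNReal.ofReal ((f (r + h) - f r) ^ 2)) (𝓝 0) (𝓝 0) := by
  set g : ℝ → C(ℝ, ℝ) := fun h => ⟨fun r => r + h, by fun_prop⟩ with hg
  have hmp : ∀ h : ℝ, MeasurePreserving (g h) volume volume := fun h =>
    measurePreserving_add_right volume h
  have hgc : Continuous g := ContinuousMap.continuous_of_continuous_uncurry _
    (by simp only [hg]; exact continuous_snd.add continuous_fst)
  have hT : Continuous fun h : ℝ => Lp.compMeasurePreserving (g h) (hmp h) (hf.toLp f) :=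
    Continuous.compMeasurePreservingLp continuous_const hgc hmp (by simp)
  have h1 := (hT.tendsto 0)
  rw [tendsto_iff_edist_tendsto_0] at h1
  have h2 : Tendsto (fun h : ℝ => edist (Lp.compMeasurePreserving (g h) (hmp h) (hf.toLp f))
    (Lp.compMeasurePreserving (g 0) (hmp 0) (hf.toLp f)) ^ 2) (𝓝 0) (𝓝 0) := by
    have := ENNReal.Tendsto.pow (n := 2) h1
    simpa using this
  refine h2.congr fun h => ?_
  rw [Lp.toLp_compMeasurePreserving hf (hmp h), Lp.toLp_compMeasurePreserving hf (hmp 0),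
    Lp.edist_toLp_toLp]
  have := eLpNorm_nnreal_pow_eq_lintegral (μ := (volume : Measure ℝ)) (p := 2)
    (f := (f ∘ g h) - (f ∘ g 0)) (by norm_num)
  have this' : eLpNorm ((f ∘ g h) - (f ∘ g 0)) 2 volume ^ 2 =
      ∫⁻ x, ‖((f ∘ g h) - (f ∘ g 0)) x‖ₑ ^ 2 := by
    simpa only [ENNReal.coe_ofNat, NNReal.coe_ofNat, ENNReal.rpow_ofNat] using this
  rw [this']
  refine lintegral_congr fun r => ?_
  simp only [Pi.sub_apply, Function.comp, hg, ContinuousMap.coe_mk, add_zero]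
  rw [Real.enorm_eq_ofReal_abs, ← ENNReal.ofReal_pow (abs_nonneg _), sq_abs]

lemma setLIntegral_Ioc_shift (f : ℝ → ℝ≥0∞) (c a : ℝ) :
    ∫⁻ s in Ioc c (c + a), f s = ∫⁻ h in Ioc 0 a, f (c + h) := by
  rw [← lintegral_indicator measurableSet_Ioc, ← lintegral_indicator measurableSet_Ioc,
    ← lintegral_add_left_eq_self _ c]
  refine lintegral_congr fun h => ?_
  by_cases hh : h ∈ Ioc 0 a
  · have hc : c + h ∈ Ioc c (c + a) := ⟨by linarith [hh.1], by linarith [hh.2]⟩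
    rw [indicator_of_mem hh, indicator_of_mem hc]
  · have hc : c + h ∉ Ioc c (c + a) := fun hc => hh ⟨by linarith [hc.1], by linarith [hc.2]⟩
    rw [indicator_of_notMem hh, indicator_of_notMem hc]

lemma sum_Ioc_shift (f : ℝ → ℝ≥0∞) {a : ℝ} (ha : 0 ≤ a) (K : ℕ) :
    ∑ k ∈ Finset.range K, ∫⁻ θ in Ioc 0 a, f (k * a + θ) = ∫⁻ r in Ioc 0 (K * a), f r := by
  induction K with
  | zero => simp
  | succ K ih =>
    have hK : (0 : ℝ) ≤ K * a := by positivity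
    rw [Finset.sum_range_succ, ih, ← setLIntegral_Ioc_shift,
      show ((K + 1 : ℕ) : ℝ) * a = K * a + a by push_cast; ring,
      ← Ioc_union_Ioc_eq_Ioc hK (by linarith : (K : ℝ) * a ≤ K * a + a),
      lintegral_union measurableSet_Ioc (Ioc_disjoint_Ioc_of_le le_rfl)]

section
variable {P : Measure Ω} {F : Filtration ℝ mΩ} {W : ℝ → Ω → ℝ}

/-- The mean translation error of a bounded process supported in `(0, u]` tends to zero with the lag,
by dominated convergence over `Ω`. -/
lemma mean_translation_tendsto [IsProbabilityMeasure P] {Y : ℝ → Ω → ℝ}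
    (hY : Measurable (Function.uncurry Y)) {u N : ℝ} (hN : ∀ s ω, |Y s ω| ≤ N)
    (hsupp : ∀ s ω, s ∉ Ioc 0 u → Y s ω = 0) :
    Tendsto (fun h => ∫⁻ ω, ∫⁻ r, ENNReal.ofReal ((Y (r + h) ω - Y r ω) ^ 2) ∂volume ∂P)
      (𝓝 0) (𝓝 0) := by
  have hYs : ∀ ω, Measurable fun s => Y s ω := fun ω => hY.comp measurable_prodMk_right
  have hbd : ∀ ω, ∫⁻ r, ENNReal.ofReal (Y r ω ^ 2) ≤ ENNReal.ofReal (N ^ 2) * volume (Ioc 0 u) := by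
    intro ω
    rw [← setLIntegral_const, ← lintegral_indicator measurableSet_Ioc]
    refine lintegral_mono fun r => ?_
    by_cases hr : r ∈ Ioc 0 u
    · rw [indicator_of_mem hr]
      exact ENNReal.ofReal_le_ofReal (sq_le_sq' (abs_le.1 (hN r ω)).1 (abs_le.1 (hN r ω)).2)
    · simp [hsupp r ω hr]
  obtain ⟨D, hD, hbd⟩ : ∃ D : ℝ≥0∞, D ≠ ⊤ ∧ ∀ ω, ∫⁻ r, ENNReal.ofReal (Y r ω ^ 2) ≤ D := by
    refine ⟨_, ?_, hbd⟩
    rw [Real.volume_Ioc]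
    exact ENNReal.mul_ne_top ENNReal.ofReal_ne_top ENNReal.ofReal_ne_top
  obtain ⟨C, hC⟩ : ∃ C : ℝ≥0∞, C = 2 * D + 2 * D := ⟨_, rfl⟩
  have hCtop : C ≠ ⊤ := by
    rw [hC]
    exact ENNReal.add_ne_top.2 ⟨ENNReal.mul_ne_top (by simp) hD, ENNReal.mul_ne_top (by simp) hD⟩
  have hbd2 : ∀ h ω, ∫⁻ r, ENNReal.ofReal ((Y (r + h) ω - Y r ω) ^ 2) ≤ C := by
    intro h ω
    have hm : Measurable fun s => Y s ω := hYs ω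
    have h2 : (2 : ℝ≥0∞) = ENNReal.ofReal 2 := by simp
    calc ∫⁻ r, ENNReal.ofReal ((Y (r + h) ω - Y r ω) ^ 2)
        ≤ ∫⁻ r, (2 * ENNReal.ofReal (Y (r + h) ω ^ 2) + 2 * ENNReal.ofReal (Y r ω ^ 2)) := by
          refine lintegral_mono fun r => ?_
          simp only [h2]
          rw [← ENNReal.ofReal_mul (by norm_num), ← ENNReal.ofReal_mul (by norm_num),
            ← ENNReal.ofReal_add (by positivity) (by positivity)]
          refine ENNReal.ofReal_le_ofReal ?_
          nlinarith [sq_nonneg (Y (r + h) ω + Y r ω)]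
      _ = 2 * (∫⁻ r, ENNReal.ofReal (Y r ω ^ 2)) + 2 * ∫⁻ r, ENNReal.ofReal (Y r ω ^ 2) := by
          rw [lintegral_add_left (by fun_prop), lintegral_const_mul _ (by fun_prop),
            lintegral_const_mul _ (by fun_prop),
            lintegral_add_right_eq_self (fun r => ENNReal.ofReal (Y r ω ^ 2)) h]
      _ ≤ C := by
          rw [hC]
          gcongr
          · exact hbd ω
          · exact hbd ω
  have hmem : ∀ ω, MemLp (fun s => Y s ω) 2 volume := by
    intro ω
    rw [memLp_two_iff_integrable_sq (hYs ω).aestronglyMeasurable]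
    refine ⟨((hYs ω).pow_const 2).aestronglyMeasurable, ?_⟩
    rw [hasFiniteIntegral_iff_ofReal (ae_of_all _ fun s => sq_nonneg _)]
    exact (hbd ω).trans_lt hD.lt_top
  have hmeas : ∀ h, Measurable fun ω => ∫⁻ r, ENNReal.ofReal ((Y (r + h) ω - Y r ω) ^ 2) := by
    intro h
    have hm : Measurable fun x : ℝ × Ω =>
        ENNReal.ofReal ((Function.uncurry Y (x.1 + h, x.2) - Function.uncurry Y x) ^ 2) := by
      fun_prop
    exact hm.lintegral_prod_left'
  have hCint : ∫⁻ _, C ∂P ≠ ⊤ := by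
    rw [lintegral_const, measure_univ, mul_one]
    exact hCtop
  have hlim : ∀ ω, Tendsto (fun h => ∫⁻ r, ENNReal.ofReal ((Y (r + h) ω - Y r ω) ^ 2))
      (𝓝 0) (𝓝 0) := by
    intro ω
    have h := translation_tendsto (f := fun s => Y s ω) (hmem ω)
    exact h
  have := tendsto_lintegral_filter_of_dominated_convergence (μ := P) (l := 𝓝 (0 : ℝ))
    (F := fun h ω => ∫⁻ r, ENNReal.ofReal ((Y (r + h) ω - Y r ω) ^ 2)) (f := fun _ => 0)
    (fun _ => C) (Eventually.of_forall hmeas)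
    (Eventually.of_forall fun h => ae_of_all _ fun ω => hbd2 h ω) hCint (ae_of_all _ hlim)
  rwa [lintegral_zero] at this

set_option maxHeartbeats 1000000 in
/-- A bounded adapted integrand supported in `(0, u]` is approximated in mean energy by elementary
ones, sampled at the left ends of a grid of mesh `a` with offset `θ ∈ (0, a]`. The average over `θ` of
the sampling error is a mean over lags `h ∈ (0, a]` of translation errors, hence small, so some
offset `θ` works. No progressive measurability of the integrand is required. -/
lemma elem_approx_bounded [IsProbabilityMeasure P] {Y : ℝ → Ω → ℝ}
    (hY : Measurable (Function.uncurry Y)) (hYa : Adapted F Y) {u N : ℝ}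
    (hN : ∀ s ω, |Y s ω| ≤ N)
    (hsupp : ∀ s ω, s ∉ Ioc 0 u → Y s ω = 0) {η : ℝ} (hη : 0 < η) :
    ∃ X J, IsElem F W X J ∧
      ∫⁻ ω, sqInt (fun s ω => Y s ω - X s ω) u ω ∂P ≤ ENNReal.ofReal η := by
  -- the mesh is small enough for the translation errors, and for dropping `Y` on `(0, θ]`
  obtain ⟨a, ha, haN, hag⟩ : ∃ a : ℝ, 0 < a ∧ N ^ 2 * a ≤ η / 2 ∧ ∀ h ∈ Ioc 0 a,
      ∫⁻ ω, ∫⁻ r, ENNReal.ofReal ((Y (r + h) ω - Y r ω) ^ 2) ∂volume ∂P ≤ ENNReal.ofReal (η / 2) := by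
    have h1 := (mean_translation_tendsto (P := P) hY hN hsupp).eventually
      (ge_mem_nhds (ENNReal.ofReal_pos.2 (half_pos hη)))
    obtain ⟨r, hr, hball⟩ := Metric.eventually_nhds_iff.1 h1
    refine ⟨min (r / 2) (η / 2 / (N ^ 2 + 1)), by positivity, ?_, fun h hh => hball ?_⟩
    · calc N ^ 2 * min (r / 2) (η / 2 / (N ^ 2 + 1))
          ≤ (N ^ 2 + 1) * (η / 2 / (N ^ 2 + 1)) := by
            gcongr
            · linarith
            · exact min_le_right _ _
        _ = η / 2 := by field_simp
    · rw [Real.dist_eq, sub_zero, abs_of_pos hh.1]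
      linarith [hh.2.trans (min_le_left _ _)]
  obtain ⟨K, hK⟩ := exists_nat_ge (u / a)
  rw [div_le_iff₀ ha] at hK
  -- `G r h` is the mean square error made when `Y (r + h)` is replaced by `Y r`
  set G : ℝ → ℝ → ℝ≥0∞ := fun r h => ∫⁻ ω, ENNReal.ofReal ((Y (r + h) ω - Y r ω) ^ 2) ∂P with hG
  have hGm : Measurable (Function.uncurry G) := by
    have hm : Measurable fun x : (ℝ × ℝ) × Ω => ENNReal.ofReal
        ((Function.uncurry Y (x.1.1 + x.1.2, x.2) - Function.uncurry Y (x.1.1, x.2)) ^ 2) := by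
      fun_prop
    exact hm.lintegral_prod_right'
  have hGint : ∀ h ∈ Ioc 0 a, ∫⁻ r, G r h ≤ ENNReal.ofReal (η / 2) := by
    intro h hh
    refine le_trans (le_of_eq ?_) (hag h hh)
    refine lintegral_lintegral_swap (f := fun r ω => ENNReal.ofReal ((Y (r + h) ω - Y r ω) ^ 2)) ?_
    have hm : Measurable fun x : ℝ × Ω =>
        ENNReal.ofReal ((Function.uncurry Y (x.1 + h, x.2) - Function.uncurry Y x) ^ 2) := by
      fun_prop
    exact hm.aemeasurable
  -- `B θ` is the total sampling error for the offset `θ`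
  set B : ℝ → ℝ≥0∞ := fun θ => ∑ k ∈ Finset.range K, ∫⁻ h in Ioc 0 a, G (k * a + θ) h with hB
  have hBm : Measurable B := by
    refine Finset.measurable_sum _ fun k _ => ?_
    have hm : Measurable fun x : ℝ × ℝ => Function.uncurry G (k * a + x.1, x.2) := by fun_prop
    exact hm.lintegral_prod_right'
  have hBint : ∫⁻ θ in Ioc 0 a, B θ ≤ ENNReal.ofReal (η / 2) * ENNReal.ofReal a := by
    simp only [hB]
    rw [lintegral_finsetSum' _ (fun k _ => by
      have hm : Measurable fun x : ℝ × ℝ => Function.uncurry G (k * a + x.1, x.2) := by fun_prop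
      exact hm.lintegral_prod_right'.aemeasurable)]
    have hsw : ∀ k ∈ Finset.range K, ∫⁻ θ in Ioc 0 a, ∫⁻ h in Ioc 0 a, G (k * a + θ) h =
        ∫⁻ h in Ioc 0 a, ∫⁻ θ in Ioc 0 a, G (k * a + θ) h := by
      intro k _
      refine lintegral_lintegral_swap (f := fun θ h => G (k * a + θ) h) ?_
      have hm : Measurable fun x : ℝ × ℝ => Function.uncurry G (k * a + x.1, x.2) := by fun_prop
      exact hm.aemeasurable
    rw [Finset.sum_congr rfl hsw, ← lintegral_finsetSum' _ (fun k _ => by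
      have hm : Measurable fun x : ℝ × ℝ => Function.uncurry G (k * a + x.1, x.2) := by fun_prop
      exact hm.lintegral_prod_left'.aemeasurable)]
    calc _ ≤ ∫⁻ h in Ioc 0 a, ENNReal.ofReal (η / 2) := by
          refine setLIntegral_mono measurable_const fun h hh => ?_
          rw [sum_Ioc_shift (fun r => G r h) ha.le K]
          exact (setLIntegral_le_lintegral _ _).trans (hGint h hh)
      _ = _ := by simp [Real.volume_Ioc]
  obtain ⟨θ, hθ, hθB⟩ : ∃ θ ∈ Ioc 0 a, B θ ≤ ENNReal.ofReal (η / 2) := by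
    have hvol : volume (Ioc 0 a) = ENNReal.ofReal a := by simp
    obtain ⟨θ, hθ, h⟩ := exists_le_setLAverage (μ := volume) (s := Ioc 0 a) (f := B)
      (by rw [hvol]; exact (ENNReal.ofReal_pos.2 ha).ne') (by rw [hvol]; finiteness)
      hBm.aemeasurable
    refine ⟨θ, hθ, h.trans ?_⟩
    rw [setLAverage_eq, hvol]
    exact ENNReal.div_le_of_le_mul hBint
  set X : ℝ → Ω → ℝ := fun s ω => ∑ k : Fin K,
    (Ioc (k * a + θ) (k * a + θ + a)).indicator (fun _ => Y (k * a + θ) ω) s with hX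
  have hel : IsElem F W X (fun s ω => ∑ k : Fin K, Y (k * a + θ) ω *
      (W (min (k * a + θ + a) s) ω - W (min (k * a + θ) s) ω)) := by
    refine ⟨Fin K, inferInstance, fun k => k * a + θ, fun k => k * a + θ + a,
      fun k => Y (k * a + θ), fun k => ⟨?_, by linarith, hYa _⟩, fun _ _ => rfl, fun _ _ => rfl⟩
    have := hθ.1
    positivity
  refine ⟨X, _, hel, ?_⟩
  have hXm := hel.measurable
  have hXk : ∀ k < K, ∀ s ∈ Ioc (k * a + θ) (k * a + θ + a), ∀ ω, X s ω = Y (k * a + θ) ω := by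
    intro k hk s hs ω
    simp only [hX]
    rw [Finset.sum_eq_single (⟨k, hk⟩ : Fin K)]
    · rw [indicator_of_mem hs]
    · intro j _ hj
      refine indicator_of_notMem (fun hc => hj ?_) _
      have e1 : (j : ℝ) < k + 1 := by
        by_contra hcon
        nlinarith [hc.1, hs.2, mul_le_mul_of_nonneg_right (not_lt.1 hcon) ha.le]
      have e2 : (k : ℝ) < j + 1 := by
        by_contra hcon
        nlinarith [hs.1, hc.2, mul_le_mul_of_nonneg_right (not_lt.1 hcon) ha.le]
      refine Fin.ext ?_
      norm_cast at e1 e2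
      simp only
      omega
    · simp
  have hX0 : ∀ s ∈ Ioc 0 θ, ∀ ω, X s ω = 0 := by
    intro s hs ω
    refine Finset.sum_eq_zero fun k _ => indicator_of_notMem (fun hc => ?_) _
    have : (0 : ℝ) ≤ k * a := by positivity
    linarith [hc.1, hs.2]
  set E : ℝ → ℝ≥0∞ := fun s => ∫⁻ ω, ENNReal.ofReal ((Y s ω - X s ω) ^ 2) ∂P with hE
  have hswap : ∫⁻ ω, sqInt (fun s ω => Y s ω - X s ω) u ω ∂P = ∫⁻ s in Ioc 0 u, E s := by
    refine (lintegral_lintegral_swap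
      (f := fun s ω => ENNReal.ofReal ((Y s ω - X s ω) ^ 2)) ?_).symm
    have hm : Measurable fun x : ℝ × Ω =>
        ENNReal.ofReal ((Function.uncurry Y x - Function.uncurry X x) ^ 2) := by fun_prop
    exact hm.aemeasurable
  rw [hswap]
  have hcover : Ioc 0 u ⊆ Ioc 0 θ ∪ Ioc θ (θ + K * a) := by
    have hKa : (0 : ℝ) ≤ K * a := by positivity
    rw [Ioc_union_Ioc_eq_Ioc hθ.1.le (by linarith)]
    exact Ioc_subset_Ioc le_rfl (by linarith [hθ.1])
  have hfirst : ∫⁻ s in Ioc 0 θ, E s ≤ ENNReal.ofReal (η / 2) := by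
    calc ∫⁻ s in Ioc 0 θ, E s ≤ ∫⁻ s in Ioc 0 θ, ENNReal.ofReal (N ^ 2) := by
          refine setLIntegral_mono measurable_const fun s hs => ?_
          simp only [hE]
          calc _ ≤ ∫⁻ ω, ENNReal.ofReal (N ^ 2) ∂P := by
                refine lintegral_mono fun ω => ?_
                rw [hX0 s hs, sub_zero]
                exact ENNReal.ofReal_le_ofReal
                  (sq_le_sq' (abs_le.1 (hN s ω)).1 (abs_le.1 (hN s ω)).2)
            _ = _ := by simp
      _ = ENNReal.ofReal (N ^ 2 * θ) := by
          rw [setLIntegral_const, Real.volume_Ioc, sub_zero, ENNReal.ofReal_mul (sq_nonneg _)]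
      _ ≤ _ := by
          refine ENNReal.ofReal_le_ofReal (le_trans ?_ haN)
          exact mul_le_mul_of_nonneg_left hθ.2 (sq_nonneg N)
  have hsecond : ∫⁻ s in Ioc θ (θ + K * a), E s ≤ B θ := by
    rw [setLIntegral_Ioc_shift, ← sum_Ioc_shift (fun h => E (θ + h)) ha.le K]
    refine Finset.sum_le_sum fun k hk => ?_
    refine setLIntegral_mono (hGm.comp measurable_prodMk_left) fun h hh => ?_
    simp only [hE, hG]
    refine lintegral_mono fun ω => ?_
    rw [hXk k (Finset.mem_range.1 hk) _ ⟨by linarith [hh.1], by linarith [hh.2]⟩,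
      show θ + (k * a + h) = k * a + θ + h by ring]
  calc ∫⁻ s in Ioc 0 u, E s ≤ ∫⁻ s in Ioc 0 θ ∪ Ioc θ (θ + K * a), E s := lintegral_mono_set hcover
    _ ≤ _ := lintegral_union_le _ _ _
    _ ≤ ENNReal.ofReal (η / 2) + ENNReal.ofReal (η / 2) := add_le_add hfirst (hsecond.trans hθB)
    _ = ENNReal.ofReal η := by
        rw [← ENNReal.ofReal_add (by positivity) (by positivity), add_halves]

/-- Elementary integrands are dense in `L²` for convergence in probability of the energy: truncate
`b` to `{s ∈ (0, u], |b| ≤ N}` and apply the bounded case. -/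
lemma elem_approx [IsProbabilityMeasure P] {b : ℝ → Ω → ℝ} (hb : MemL2 P F b) {u : ℝ}
    (hu : 0 ≤ u) {η : ℝ} (hη : 0 < η) :
    ∃ X J, IsElem F W X J ∧
      P {ω | ENNReal.ofReal η < sqInt (fun s ω => b s ω - X s ω) u ω} ≤ ENNReal.ofReal η := by
  classical
  obtain ⟨hbm, hba, hbi⟩ := hb
  set A : ℕ → ℝ → Set ℝ := fun N s => {x | s ∈ Ioc 0 u ∧ |x| ≤ N} with hA
  set Y : ℕ → ℝ → Ω → ℝ := fun N s ω => (A N s).indicator id (b s ω) with hYdef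
  have hAm : ∀ N s, MeasurableSet (A N s) := by
    intro N s
    by_cases hs : s ∈ Ioc 0 u
    · simp only [hA, hs, true_and]
      exact measurable_abs measurableSet_Iic
    · have : A N s = ∅ := eq_empty_of_forall_notMem fun x hx => hs hx.1
      rw [this]
      exact MeasurableSet.empty
  have hYm : ∀ N, Measurable (Function.uncurry (Y N)) := by
    intro N
    have hm : MeasurableSet {x : ℝ × Ω | x.1 ∈ Ioc 0 u ∧ |Function.uncurry b x| ≤ N} :=
      (measurable_fst measurableSet_Ioc).inter
        ((measurable_abs.comp hbm) measurableSet_Iic)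
    have : Function.uncurry (Y N) =
        {x : ℝ × Ω | x.1 ∈ Ioc 0 u ∧ |Function.uncurry b x| ≤ N}.indicator
          (Function.uncurry b) := by
      ext ⟨s, ω⟩
      by_cases h : s ∈ Ioc 0 u ∧ |b s ω| ≤ N
      · exact (indicator_of_mem (s := A N s) h _).trans (indicator_of_mem
          (s := {x : ℝ × Ω | x.1 ∈ Ioc 0 u ∧ |Function.uncurry b x| ≤ N}) (a := (s, ω)) h
          (Function.uncurry b)).symm
      · exact (indicator_of_notMem (s := A N s) h _).trans (indicator_of_notMem
          (s := {x : ℝ × Ω | x.1 ∈ Ioc 0 u ∧ |Function.uncurry b x| ≤ N}) (a := (s, ω)) h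
          (Function.uncurry b)).symm
    rw [this]
    exact hbm.indicator hm
  have hYa : ∀ N, Adapted F (Y N) := fun N s =>
    (measurable_id.indicator (hAm N s)).comp (hba s)
  have hYb : ∀ N s ω, |Y N s ω| ≤ N := by
    intro N s ω
    by_cases h : b s ω ∈ A N s
    · simp only [hYdef, indicator_of_mem h]
      exact h.2
    · simp [hYdef, indicator_of_notMem h]
  have hYs : ∀ N s ω, s ∉ Ioc 0 u → Y N s ω = 0 := fun N s ω hs =>
    indicator_of_notMem (fun hc => hs hc.1) _
  have hdm : ∀ N, Measurable (Function.uncurry fun s ω => b s ω - Y N s ω) := fun N =>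
    hbm.sub (hYm N)
  have hlim : ∀ᵐ ω ∂P, Tendsto (fun N => sqInt (fun s ω => b s ω - Y N s ω) u ω) atTop (𝓝 0) := by
    filter_upwards [hbi u hu] with ω hω
    have hmb : Measurable fun s => b s ω := hbm.comp measurable_prodMk_right
    have := tendsto_lintegral_of_dominated_convergence (μ := volume.restrict (Ioc 0 u))
      (F := fun N s => ENNReal.ofReal ((b s ω - Y N s ω) ^ 2)) (f := fun _ => 0)
      (fun s => ENNReal.ofReal (b s ω ^ 2))
      (fun N => by
        have : Measurable fun s => b s ω - Y N s ω := (hdm N).comp measurable_prodMk_right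
        fun_prop)
      (fun N => ae_of_all _ fun s => by
        refine ENNReal.ofReal_le_ofReal ?_
        by_cases h : b s ω ∈ A N s
        · simp only [hYdef, indicator_of_mem h, id, sub_self]
          nlinarith [sq_nonneg (b s ω)]
        · simp [hYdef, indicator_of_notMem h])
      hω.ne
      ((ae_restrict_iff' measurableSet_Ioc).2 <| ae_of_all _ fun s hs => by
        obtain ⟨N0, hN0⟩ := exists_nat_ge |b s ω|
        refine tendsto_const_nhds.congr' ?_
        filter_upwards [eventually_ge_atTop N0] with N hNN
        have h : b s ω ∈ A N s := ⟨hs, hN0.trans (by exact_mod_cast hNN)⟩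
        simp [hYdef, indicator_of_mem h])
    simpa only [sqInt, lintegral_zero] using this
  -- almost sure convergence gives convergence in probability, through the truncated energies
  have hη4 : 0 < η / 4 := by positivity
  have hη4' : ENNReal.ofReal (η / 4) ≠ 0 := (ENNReal.ofReal_pos.2 hη4).ne'
  have hmeas : Tendsto (fun N =>
      P {ω | ENNReal.ofReal (η / 4) < sqInt (fun s ω => b s ω - Y N s ω) u ω}) atTop (𝓝 0) := by
    have h1 := tendsto_lintegral_of_dominated_convergence (μ := P)
      (F := fun N ω => min (sqInt (fun s ω => b s ω - Y N s ω) u ω) (ENNReal.ofReal (η / 4)))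
      (f := fun _ => 0) (fun _ => ENNReal.ofReal (η / 4))
      (fun N => (measurable_sqInt (hdm N) u).min measurable_const)
      (fun N => ae_of_all _ fun ω => min_le_right _ _) (by simp)
      (by
        filter_upwards [hlim] with ω hω
        have := hω.min (tendsto_const_nhds (x := ENNReal.ofReal (η / 4)))
        simpa using this)
    have h2 := ENNReal.Tendsto.div_const h1 (Or.inr hη4')
    simp only [lintegral_const, zero_mul, ENNReal.zero_div] at h2
    refine tendsto_of_tendsto_of_tendsto_of_le_of_le tendsto_const_nhds h2
      (fun _ => zero_le) fun N => ?_
    refine le_trans (measure_mono ?_) (meas_ge_le_lintegral_div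
      ((measurable_sqInt (hdm N) u).min measurable_const).aemeasurable hη4' (by finiteness))
    intro ω hω
    exact le_min (le_of_lt (mem_ofPred_eq ▸ hω)) le_rfl
  obtain ⟨N, hN⟩ := (hmeas.eventually
    (ge_mem_nhds (ENNReal.ofReal_pos.2 (half_pos hη)))).exists
  obtain ⟨X, J, hXJ, hXi⟩ := elem_approx_bounded (P := P) (W := W) (hYm N) (hYa N) (hYb N) (hYs N)
    (η := η / 2 * (η / 4)) (by positivity)
  refine ⟨X, J, hXJ, ?_⟩
  refine (measure_sqInt_triangle P (c := X) hbm (hYm N) u hη).trans ?_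
  calc _ ≤ ENNReal.ofReal (η / 2) + ENNReal.ofReal (η / 2) := by
        refine add_le_add hN ?_
        refine le_trans (measure_mono (t := {ω | ENNReal.ofReal (η / 4) ≤
          sqInt (fun s ω => Y N s ω - X s ω) u ω}) fun ω hω => (LT.lt.le (by simpa using hω))) ((meas_ge_le_lintegral_div
          (measurable_sqInt ((hYm N).sub hXJ.measurable) u).aemeasurable hη4'
          (by finiteness)).trans ?_)
        refine ENNReal.div_le_of_le_mul (hXi.trans (le_of_eq ?_))
        rw [ENNReal.ofReal_mul (by positivity)]
    _ = _ := by rw [← ENNReal.ofReal_add (by positivity) (by positivity), add_halves]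
end

/-! ### The integral process -/

/-- Paths that vanish on `(-∞, 0]` and whose successive differences are eventually geometrically small
on `[0, n]` converge locally uniformly, so that the limit is continuous. -/
lemma exists_continuous_limit {j : ℕ → ℝ → ℝ} (hc : ∀ n, Continuous (j n))
    (h0 : ∀ n s, s ≤ 0 → j n s = 0)
    (h : ∀ᶠ n : ℕ in atTop, ∀ s ∈ Icc 0 (n : ℝ), |j n s - j (n + 1) s| ≤ (1 / 2) ^ n) :
    ∃ g : ℝ → ℝ, Continuous g ∧ ∀ s, Tendsto (fun n => j n s) atTop (𝓝 (g s)) := by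
  obtain ⟨N, hN⟩ := eventually_atTop.1 h
  have hstep : ∀ M ≥ N, ∀ s ≤ (M : ℝ), ∀ k,
      dist (j (k + M) s) (j (k + 1 + M) s) ≤ (1 / 2) ^ M * (1 / 2) ^ k := by
    intro M hM s hs k
    rw [Real.dist_eq, ← pow_add, add_comm M k, add_right_comm k 1 M]
    rcases le_total s 0 with hs0 | hs0
    · rw [h0 _ _ hs0, h0 _ _ hs0, sub_zero, abs_zero]
      positivity
    · refine hN (k + M) (by omega) s ⟨hs0, hs.trans ?_⟩
      push_cast
      linarith [(Nat.cast_nonneg k : (0 : ℝ) ≤ k)]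
  have hlim : ∀ s, ∃ y, Tendsto (fun n => j n s) atTop (𝓝 y) := by
    intro s
    obtain ⟨m, hm⟩ := exists_nat_ge s
    have hM : s ≤ ((max N m : ℕ) : ℝ) := hm.trans (by exact_mod_cast le_max_right _ _)
    obtain ⟨y, hy⟩ := cauchySeq_tendsto_of_complete
      (cauchySeq_of_le_geometric _ _ (by norm_num) (hstep _ (le_max_left _ _) s hM))
    exact ⟨y, (tendsto_add_atTop_iff_nat (max N m)).1 hy⟩
  choose g hg using hlim
  refine ⟨g, ?_, hg⟩
  have hdist : ∀ M ≥ N, ∀ s ≤ (M : ℝ), dist (j M s) (g s) ≤ 2 * (1 / 2) ^ M := by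
    intro M hM s hs
    have := dist_le_of_le_geometric_of_tendsto _ _ (by norm_num) (hstep M hM s hs)
      ((tendsto_add_atTop_iff_nat M).2 (hg s)) 0
    rw [zero_add] at this
    refine this.trans (le_of_eq ?_)
    ring
  have htl : TendstoLocallyUniformly j g atTop := by
    rw [Metric.tendstoLocallyUniformly_iff]
    intro ε hε x
    refine ⟨Iio (x + 1), Iio_mem_nhds (by linarith), ?_⟩
    have h1 : Tendsto (fun n : ℕ => 2 * (1 / 2 : ℝ) ^ n) atTop (𝓝 0) := by
      simpa using (tendsto_pow_atTop_nhds_zero_of_lt_one (by norm_num : (0 : ℝ) ≤ 1 / 2)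
        (by norm_num)).const_mul 2
    filter_upwards [eventually_ge_atTop N, h1.eventually (gt_mem_nhds hε),
      tendsto_natCast_atTop_atTop.eventually (eventually_ge_atTop (x + 1))] with n hn hn' hnx y hy
    rw [dist_comm]
    exact (hdist n hn y (le_trans (le_of_lt hy) hnx)).trans_lt hn'
  exact htl.continuous (Frequently.of_forall hc)

section
variable {P : Measure Ω} {F : Filtration ℝ mΩ} {W : ℝ → Ω → ℝ}

lemma sqInt_mono (X : ℝ → Ω → ℝ) {u v : ℝ} (h : u ≤ v) (ω : Ω) : sqInt X u ω ≤ sqInt X v ω :=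
  lintegral_mono_set (Ioc_subset_Ioc le_rfl h)

/-- The integral process as an almost sure, locally uniform limit of elementary integrals. The good
event of the Borel–Cantelli argument is the complement of a null set, hence belongs to every `F t`;
setting the integral to zero off this event keeps it adapted and makes every path continuous. -/
lemma exists_limit_process [IsProbabilityMeasure P] [P.IsComplete] (hF : AugmentedFiltration P F)
    (hW : IsWienerProcess P F W) {b : ℝ → Ω → ℝ} (hb : MemL2 P F b) :
    ∃ Y : ℝ → Ω → ℝ, Adapted F Y ∧ (∀ ω, Continuous fun s => Y s ω) ∧
      ∃ X J : ℕ → ℝ → Ω → ℝ, (∀ n, IsElem F W (X n) (J n)) ∧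
        (∀ n : ℕ, P {ω | ENNReal.ofReal ((1 / 8) ^ n) < sqInt (fun s ω => b s ω - X n s ω) n ω} ≤
          ENNReal.ofReal ((1 / 8) ^ n)) ∧
        ∀ᵐ ω ∂P, ∀ s, Tendsto (fun n => J n s ω) atTop (𝓝 (Y s ω)) := by
  have hex : ∀ n : ℕ, ∃ X J, IsElem F W X J ∧
      P {ω | ENNReal.ofReal ((1 / 8) ^ n) < sqInt (fun s ω => b s ω - X s ω) n ω} ≤
        ENNReal.ofReal ((1 / 8) ^ n) := fun n =>
    elem_approx hb n.cast_nonneg (by positivity)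
  choose X J hXJ hX using hex
  have hest : ∀ n : ℕ, P {ω | ∃ s ∈ Icc 0 (n : ℝ), (1 / 2) ^ n < |J n s ω - J (n + 1) s ω|} ≤
      ENNReal.ofReal (6 * (1 / 2) ^ n) := by
    intro n
    refine (elem_max hW ((hXJ n).sub (hXJ (n + 1))) n.cast_nonneg (ε := (1 / 2) ^ n)
      (δ := 4 * (1 / 8) ^ n) (by positivity) (by positivity)).trans ?_
    have h8 : ((1 / 8 : ℝ)) ^ n = ((1 / 2) ^ n) ^ 3 := by
      rw [← pow_mul, mul_comm, pow_mul]; norm_num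
    have hle : (1 / 2 : ℝ) ^ n ≤ 1 := pow_le_one₀ (by norm_num) (by norm_num)
    have hpos : (0 : ℝ) < (1 / 2) ^ n := by positivity
    have e1 : 4 * (1 / 8 : ℝ) ^ n / ((1 / 2) ^ n) ^ 2 = 4 * (1 / 2) ^ n := by
      rw [h8]; field_simp
    have e2 : (1 / 8 : ℝ) ^ n ≤ (1 / 2) ^ n := by
      gcongr; norm_num
    have e3 : (1 / 8 : ℝ) ^ (n + 1) ≤ (1 / 8) ^ n :=
      pow_le_pow_of_le_one (by norm_num) (by norm_num) (Nat.le_succ n)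
    have t1 : P {ω | ENNReal.ofReal ((1 / 8) ^ n) < sqInt (fun s ω => X n s ω - b s ω) n ω} ≤
        ENNReal.ofReal ((1 / 2) ^ n) := by
      simp only [sqInt_symm (X n) b]
      exact (hX n).trans (ENNReal.ofReal_le_ofReal e2)
    have t2 : P {ω | ENNReal.ofReal ((1 / 8) ^ n) < sqInt (fun s ω => b s ω - X (n + 1) s ω) n ω} ≤
        ENNReal.ofReal ((1 / 2) ^ n) := by
      refine (measure_mono ?_).trans ((hX (n + 1)).trans
        (ENNReal.ofReal_le_ofReal (e3.trans e2)))
      intro ω hω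
      rw [mem_ofPred_eq] at hω ⊢
      exact (ENNReal.ofReal_le_ofReal e3).trans_lt
        (hω.trans_le (sqInt_mono _ (by push_cast; linarith) ω))
    have t3 := measure_sqInt_triangle P (a := X n) (b := b) (c := X (n + 1)) (hXJ n).measurable
      hb.1 n (δ := 4 * (1 / 8) ^ n) (by positivity)
    rw [mul_div_cancel_left₀ _ (by norm_num : (4 : ℝ) ≠ 0)] at t3
    rw [e1]
    calc _ ≤ ENNReal.ofReal (4 * (1 / 2) ^ n) +
          (ENNReal.ofReal ((1 / 2) ^ n) + ENNReal.ofReal ((1 / 2) ^ n)) :=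
          add_le_add le_rfl (t3.trans (add_le_add t1 t2))
      _ = _ := by
          rw [← ENNReal.ofReal_add hpos.le hpos.le, ← ENNReal.ofReal_add (by positivity)
            (by positivity)]
          congr 1; ring
  have hsum : ∑' n : ℕ, P {ω | ∃ s ∈ Icc 0 (n : ℝ), (1 / 2) ^ n < |J n s ω - J (n + 1) s ω|} ≠ ⊤ := by
    refine ne_top_of_le_ne_top (Summable.tsum_ofReal_ne_top ?_) (ENNReal.tsum_le_tsum hest)
    exact (summable_geometric_of_lt_one (by norm_num) (by norm_num)).mul_left 6
  have hae := ae_eventually_notMem hsum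
  set G : Set Ω := {ω | ∀ᶠ n : ℕ in atTop, ∀ s ∈ Icc 0 (n : ℝ),
    |J n s ω - J (n + 1) s ω| ≤ (1 / 2) ^ n} with hG
  have hGae : ∀ᵐ ω ∂P, ω ∈ G := by
    filter_upwards [hae] with ω hω
    rw [hG, mem_ofPred_eq]
    filter_upwards [hω] with n hn s hs
    by_contra hcon
    exact hn ⟨s, hs, not_le.1 hcon⟩
  have hGF : ∀ t, MeasurableSet[F t] G := by
    intro t
    have h0 : P Gᶜ = 0 := hGae
    have := hF t Gᶜ (Measure.IsComplete.out' _ h0) h0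
    simpa using this.compl
  have hlim : ∀ ω, ∃ g : ℝ → ℝ, Continuous g ∧
      ∀ s, Tendsto (fun n => G.indicator (J n s) ω) atTop (𝓝 (g s)) := by
    intro ω
    by_cases hω : ω ∈ G
    · simp only [indicator_of_mem hω]
      exact exists_continuous_limit (j := fun n s => J n s ω) (fun n => (hXJ n).continuous hW ω)
        (fun n s hs => (hXJ n).eq_zero hs ω) hω
    · simp only [indicator_of_notMem hω]
      exact ⟨fun _ => 0, continuous_const, fun _ => tendsto_const_nhds⟩
  choose g hgc hg using hlim
  refine ⟨fun s ω => g ω s, fun s => ?_, hgc, X, J, hXJ, hX, ?_⟩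
  · refine @measurable_of_tendsto_metrizable Ω ℝ (F s) _ _ _ _ (fun n => G.indicator (J n s)) _
      (fun n => ((hXJ n).adapted hW s).indicator (hGF s)) ?_
    exact tendsto_pi_nhds.2 fun ω => hg ω s
  · filter_upwards [hGae] with ω hω s
    simpa only [indicator_of_mem hω] using hg ω s

/-- Existence of an integral process `Y` of `b`, with the property that determines it: at each time
it is close in probability to any elementary integral whose integrand is close to `b` in energy,
with a modulus `κ` uniform in the elementary integrand and in the time. -/
lemma exists_integral [IsProbabilityMeasure P] [P.IsComplete] (hF : AugmentedFiltration P F)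
    (hW : IsWienerProcess P F W) {b : ℝ → Ω → ℝ} (hb : MemL2 P F b) :
    ∃ Y : ℝ → Ω → ℝ, Adapted F Y ∧ (∀ ω, Continuous fun s => Y s ω) ∧
      ∀ ε > 0, ∀ c > 0, ∃ κ > 0, ∀ X J, IsElem F W X J → ∀ u, 0 ≤ u →
        P {ω | ε < |Y u ω - J u ω|} ≤ ENNReal.ofReal c +
          P {ω | ENNReal.ofReal κ < sqInt (fun s ω => b s ω - X s ω) u ω} := by
  obtain ⟨Y, hYa, hYc, Xn, Jn, hXJ, hXn, hlim⟩ := exists_limit_process hF hW hb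
  refine ⟨Y, hYa, hYc, fun ε hε c hc => ?_⟩
  obtain ⟨δ, hδ, hδc⟩ : ∃ δ > 0, δ / (ε / 2) ^ 2 = c :=
    ⟨c * (ε / 2) ^ 2, by positivity, by field_simp⟩
  refine ⟨δ / 4, by positivity, fun X J h u hu => ?_⟩
  rw [← hδc]
  have hprob : Tendsto (fun n => P {ω | ε / 2 ≤ ‖Jn n u ω - Y u ω‖}) atTop (𝓝 0) := by
    have := tendstoInMeasure_of_tendsto_ae (μ := P) (f := fun n => Jn n u) (g := Y u)
      (fun n => (((hXJ n).adapted hW u).mono (F.le u) le_rfl).aestronglyMeasurable)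
      (hlim.mono fun ω hω => hω u)
    exact tendstoInMeasure_iff_norm.1 this _ (half_pos hε)
  have hsq : Tendsto (fun n => P {ω | ENNReal.ofReal (δ / 4) <
      sqInt (fun s ω => Xn n s ω - b s ω) u ω}) atTop (𝓝 0) := by
    have h1 : Tendsto (fun n : ℕ => (1 / 8 : ℝ) ^ n) atTop (𝓝 0) :=
      tendsto_pow_atTop_nhds_zero_of_lt_one (by norm_num) (by norm_num)
    have h2 : Tendsto (fun n : ℕ => ENNReal.ofReal ((1 / 8) ^ n)) atTop (𝓝 0) := by
      simpa using ENNReal.tendsto_ofReal h1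
    refine tendsto_of_tendsto_of_tendsto_of_le_of_le' tendsto_const_nhds h2
      (Eventually.of_forall fun _ => zero_le) ?_
    filter_upwards [h1.eventually (ge_mem_nhds (by positivity : 0 < δ / 4)),
      tendsto_natCast_atTop_atTop.eventually (eventually_ge_atTop u)] with n hn hnu
    refine (measure_mono fun ω hω => ?_).trans (hXn n)
    rw [mem_ofPred_eq, sqInt_symm] at hω
    exact (ENNReal.ofReal_le_ofReal hn).trans_lt (hω.trans_le (sqInt_mono _ hnu ω))
  have hb' : ∀ n, P {ω | ε < |Y u ω - J u ω|} ≤ P {ω | ε / 2 ≤ ‖Jn n u ω - Y u ω‖} +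
      (ENNReal.ofReal (δ / (ε / 2) ^ 2) +
        (P {ω | ENNReal.ofReal (δ / 4) < sqInt (fun s ω => Xn n s ω - b s ω) u ω} +
        P {ω | ENNReal.ofReal (δ / 4) < sqInt (fun s ω => b s ω - X s ω) u ω})) := by
    intro n
    have hsub : {ω | ε < |Y u ω - J u ω|} ⊆ {ω | ε / 2 ≤ ‖Jn n u ω - Y u ω‖} ∪
        {ω | ∃ s ∈ Icc 0 u, ε / 2 < |Jn n s ω - J s ω|} := by
      intro ω hω
      by_contra hcon
      simp only [mem_union, mem_ofPred_eq, not_or, not_le, not_exists, not_and, not_lt] at hcon hω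
      have h1 := hcon.1
      have h2 := hcon.2 u ⟨hu, le_rfl⟩
      rw [Real.norm_eq_abs, abs_sub_comm] at h1
      have := abs_sub_le (Y u ω) (Jn n u ω) (J u ω)
      linarith
    refine (measure_mono hsub).trans ((measure_union_le _ _).trans (add_le_add le_rfl ?_))
    refine (elem_max hW ((hXJ n).sub h) hu (half_pos hε) hδ.le).trans (add_le_add le_rfl ?_)
    exact measure_sqInt_triangle P (hXJ n).measurable hb.1 u hδ
  refine ge_of_tendsto' (x := atTop) ?_ hb'
  have := hprob.add ((tendsto_const_nhds (x := ENNReal.ofReal (δ / (ε / 2) ^ 2))).add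
    (hsq.add (tendsto_const_nhds (x :=
      P {ω | ENNReal.ofReal (δ / 4) < sqInt (fun s ω => b s ω - X s ω) u ω}))))
  simpa only [zero_add] using this

/-- A simple process is elementary up to its value at time zero, which no energy sees, and its integral
after the last grid point is the elementary sum. -/
lemma simple_isElem {b : ℝ → Ω → ℝ} {n : ℕ} {t : ℕ → ℝ} (h : IsSimpleWith F b n t) :
    ∃ X J, IsElem F W X J ∧ (∀ s ω, 0 < s → X s ω = b s ω) ∧
      ∀ u ω, t n ≤ u → 0 ≤ u ∧ J u ω = ElemInt W b n t ω := by
  obtain ⟨h0, hlt, -, hm, hb⟩ := h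
  have hmono : ∀ k ≤ n, ∀ i ≤ k, t i ≤ t k := by
    intro k
    induction k with
    | zero =>
      intro _ i hi
      rw [Nat.le_zero.1 hi]
    | succ k ih =>
      intro hk i hi
      rcases Nat.le_succ_iff.1 hi with hi' | rfl
      · exact (ih (by omega) i hi').trans (hlt k (by omega)).le
      · exact le_rfl
  have hpos : ∀ i ≤ n, 0 ≤ t i := fun i hi => h0 ▸ hmono i hi 0 (Nat.zero_le i)
  refine ⟨_, _, ⟨Fin n, inferInstance, fun i => t i, fun i => t (i + 1), fun i => b (t (i + 1)),
    fun i => ⟨hpos i i.2.le, (hlt i i.2).le, hm i i.2⟩, fun _ _ => rfl, fun _ _ => rfl⟩, ?_, ?_⟩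
  · intro s ω hs
    rw [hb s ω, indicator_of_notMem (by simpa using hs.ne'), zero_add,
      Finset.sum_range fun i => (Ioc (t i) (t (i + 1))).indicator (fun _ => b (t (i + 1)) ω) s]
  · intro u ω hu
    refine ⟨(hpos n le_rfl).trans hu, ?_⟩
    rw [ElemInt, Finset.sum_range fun i => b (t (i + 1)) ω * (W (t (i + 1)) ω - W (t i) ω)]
    refine Finset.sum_congr rfl fun i _ => ?_
    rw [min_eq_left ((hmono n le_rfl _ i.2).trans hu),
      min_eq_left ((hmono n le_rfl _ i.2.le).trans hu)]

lemma sqInt_congr {X Y : ℝ → Ω → ℝ} {u : ℝ} {ω : Ω} (h : ∀ s, 0 < s → X s ω = Y s ω) :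
    sqInt X u ω = sqInt Y u ω :=
  setLIntegral_congr_fun measurableSet_Ioc fun s hs => by
    simp only [h s hs.1]

lemma MemH2.memL2 {b : ℝ → Ω → ℝ} (h : MemH2 P F b) : MemL2 P F b :=
  ⟨h.1, h.2.1, fun t ht => ae_lt_top (measurable_sqInt h.1 t) (h.2.2 t ht).ne⟩

/-- For two integrands in `L²` the energy of the difference is almost surely finite, so it agrees with
the Bochner integral. -/
lemma ofReal_integral_sq {a b : ℝ → Ω → ℝ} (ha : MemL2 P F a) (hb : MemL2 P F b) {u : ℝ}
    (hu : 0 ≤ u) : ∀ᵐ ω ∂P, sqInt (fun s ω => a s ω - b s ω) u ω =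
      ENNReal.ofReal (∫ s in Ioc 0 u, (a s ω - b s ω) ^ 2) := by
  filter_upwards [ha.2.2 u hu, hb.2.2 u hu] with ω h1 h2
  have hma : Measurable fun s => a s ω := ha.1.comp measurable_prodMk_right
  have hmb : Measurable fun s => b s ω := hb.1.comp measurable_prodMk_right
  have hfin : sqInt (fun s ω => a s ω - b s ω) u ω ≠ ⊤ := by
    have h := sqInt_triangle (a := a) (b := fun _ _ => 0) (c := b) ha.1 measurable_const u ω
    refine ne_top_of_le_ne_top ?_ h
    simp only [sqInt, sub_zero, zero_sub, neg_sq]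
    exact ENNReal.add_ne_top.2 ⟨ENNReal.mul_ne_top (by simp) h1.ne,
      ENNReal.mul_ne_top (by simp) h2.ne⟩
  rw [integral_eq_lintegral_of_nonneg_ae (ae_of_all _ fun s => sq_nonneg _)
    (by fun_prop)]
  exact (ENNReal.ofReal_toReal hfin).symm

/-- If `X` agrees with `b` at positive times, the energy of `b - X` is zero and the approximation
property of `exists_integral` forces equality almost surely. -/
lemma ae_eq_of_estimate {b X Y J : ℝ → Ω → ℝ} {u : ℝ}
    (hYJ : ∀ ε > 0, ∀ c > 0, ∃ κ > 0, P {ω | ε < |Y u ω - J u ω|} ≤ ENNReal.ofReal c +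
          P {ω | ENNReal.ofReal κ < sqInt (fun s ω => b s ω - X s ω) u ω})
    (hX : ∀ s ω, 0 < s → X s ω = b s ω) : ∀ᵐ ω ∂P, Y u ω = J u ω := by
  have hz : ∀ ω, sqInt (fun s ω => b s ω - X s ω) u ω = 0 := by
    intro ω
    rw [sqInt_congr (Y := fun _ _ => 0) fun s hs => by rw [hX s ω hs, sub_self]]
    simp [sqInt]
  simp only [hz, not_lt_zero, ofPred_false, measure_empty, add_zero] at hYJ
  have hε : ∀ ε > 0, P {ω | ε < |Y u ω - J u ω|} = 0 := by
    intro ε hε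
    refine le_antisymm (ENNReal.le_of_forall_pos_le_add fun c hc _ => ?_) zero_le
    obtain ⟨κ, -, h⟩ := hYJ ε hε c (by exact_mod_cast hc)
    rwa [ENNReal.ofReal_coe_nnreal, ← zero_add (c : ℝ≥0∞)] at h
  have hall : ∀ᵐ ω ∂P, ∀ n : ℕ, |Y u ω - J u ω| ≤ 1 / ((n : ℝ) + 1) := by
    rw [ae_all_iff]
    intro n
    rw [ae_iff]
    simpa only [not_le] using hε _ (by positivity)
  filter_upwards [hall] with ω hω
  have h0 : |Y u ω - J u ω| ≤ 0 := ge_of_tendsto' tendsto_one_div_add_atTop_nhds_zero_nat hω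
  exact sub_eq_zero.1 (abs_nonpos_iff.1 h0)

end

end StochasticIntegral

/-- Existence of a stochastic integral mapping `I : L² → C`. -/
theorem exists_stochasticIntegralMap
    (P : Measure Ω) [IsProbabilityMeasure P] [P.IsComplete]
    (F : Filtration ℝ mΩ) (hF : AugmentedFiltration P F)
    (W : ℝ → Ω → ℝ) (hW : IsWienerProcess P F W) :
    ∃ I : (ℝ → Ω → ℝ) → ℝ → Ω → ℝ, IsStochasticIntegralMap P F W I := by
  have hex : ∀ b : ℝ → Ω → ℝ, ∃ Y : ℝ → Ω → ℝ, MemL2 P F b → Adapted F Y ∧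
      (∀ ω, Continuous fun s => Y s ω) ∧
      ∀ ε > 0, ∀ c > 0, ∃ κ > 0, ∀ X J, IsElem F W X J → ∀ u, 0 ≤ u →
        P {ω | ε < |Y u ω - J u ω|} ≤ ENNReal.ofReal c +
          P {ω | ENNReal.ofReal κ < sqInt (fun s ω => b s ω - X s ω) u ω} := by
    intro b
    by_cases hb : MemL2 P F b
    · obtain ⟨Y, hY⟩ := exists_integral hF hW hb
      exact ⟨Y, fun _ => hY⟩
    · exact ⟨fun _ _ => 0, fun h => absurd h hb⟩
  choose I hI using hex
  -- on a simple integrand `I` agrees at every time with the integral of its elementary version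
  have hsimple : ∀ b, MemL2 P F b → ∀ X J, IsElem F W X J → (∀ s ω, 0 < s → X s ω = b s ω) →
      ∀ u, 0 ≤ u → ∀ᵐ ω ∂P, I b u ω = J u ω := by
    intro b hb X J hXJ hX u hu
    refine ae_eq_of_estimate (fun ε hε c hc => ?_) hX
    obtain ⟨κ, hκ, h⟩ := (hI b hb).2.2 ε hε c hc
    exact ⟨κ, hκ, h X J hXJ u hu⟩
  refine ⟨I, fun b hb => ⟨(hI b hb).1, (hI b hb).2.1⟩, ?_, ?_⟩
  · intro b n t hb hs u hu
    obtain ⟨X, J, hXJ, hX, hJ⟩ := simple_isElem (W := W) hs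
    obtain ⟨ω₀⟩ : Nonempty Ω := nonempty_of_isProbabilityMeasure P
    filter_upwards [hsimple b hb X J hXJ hX u (hJ u ω₀ hu).1] with ω hω
    rw [hω, (hJ u ω hu).2]
  · intro u hu b hb bs hbs hconv
    have hel : ∀ k, ∃ X J, IsElem F W X J ∧ ∀ s ω, 0 < s → X s ω = bs k s ω := by
      intro k
      obtain ⟨⟨n, t, hs⟩, -⟩ := hbs k
      obtain ⟨X, J, hXJ, hX, -⟩ := simple_isElem (W := W) hs
      exact ⟨X, J, hXJ, hX⟩
    choose X J hXJ hX using hel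
    refine TendstoInMeasure.congr_left (f := fun k => J k u)
      (fun k => (hsimple _ (hbs k).2.memL2 _ _ (hXJ k) (hX k) u hu).mono fun ω hω => hω.symm) ?_
    rw [tendstoInMeasure_iff_norm] at hconv ⊢
    intro ε hε
    rw [ENNReal.tendsto_nhds_zero]
    intro c hc
    obtain ⟨d, hd, hdc⟩ : ∃ d : ℝ, 0 < d ∧ ENNReal.ofReal d + ENNReal.ofReal d ≤ c := by
      obtain ⟨r, hr, hrc⟩ := ENNReal.lt_iff_exists_nnreal_btwn.1 hc
      refine ⟨r / 2, by simpa using hr, ?_⟩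
      rw [← ENNReal.ofReal_add (by positivity) (by positivity), add_halves,
        ENNReal.ofReal_coe_nnreal]
      exact hrc.le
    obtain ⟨κ, hκ, hest⟩ := (hI b hb).2.2 (ε / 2) (half_pos hε) d hd
    filter_upwards [(ENNReal.tendsto_nhds_zero.1 (hconv κ hκ)) _ (ENNReal.ofReal_pos.2 hd)]
      with k hk
    have h1 : P {ω | ε ≤ ‖J k u ω - I b u ω‖} ≤ P {ω | ε / 2 < |I b u ω - J k u ω|} := by
      refine measure_mono fun ω hω => ?_
      rw [mem_ofPred_eq, Real.norm_eq_abs, abs_sub_comm] at hω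
      exact (half_lt_self hε).trans_le hω
    have h2 : P {ω | ENNReal.ofReal κ < sqInt (fun s ω => b s ω - X k s ω) u ω} ≤
        P {ω | κ ≤ ‖(∫ s in Ioc (0 : ℝ) u, (b s ω - bs k s ω) ^ 2) - 0‖} := by
      refine measure_mono_ae ?_
      filter_upwards [ofReal_integral_sq hb (hbs k).2.memL2 hu] with ω hω hlt
      have hlt' : ENNReal.ofReal κ < sqInt (fun s ω => b s ω - X k s ω) u ω := hlt
      rw [sqInt_congr (Y := fun s ω => b s ω - bs k s ω) fun s hs => by rw [hX k s ω hs], hω] at hlt'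
      have := (ENNReal.ofReal_lt_ofReal_iff_of_nonneg hκ.le).1 hlt'
      show κ ≤ ‖_ - (0 : ℝ)‖
      rw [sub_zero]
      exact this.le.trans (Real.le_norm_self _)
    exact h1.trans ((hest _ _ (hXJ k) u hu).trans ((add_le_add le_rfl (h2.trans hk)).trans hdc))
end

section
/- Every measurable and adapted real-valued stochastic process has a progressively measurable modification; that is, if b is a process on [0,∞) × Ω that is jointly measurable and adapted to the filtration F, then there exists a progressively measurable process b' such that for every t ≥ 0, b'(t) = b(t) almost surely. -/
/-!
Let `g = arctan ∘ b`, a bounded jointly measurable process. The map `t ↦ [g t]` into `L¹(P)` is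
strongly measurable (`L1Measurable.of_bounded`): this is clear for indicators of rectangles, passes
to indicators of all product-measurable sets by the π-λ theorem, and then to bounded functions by
approximation with simple functions. In particular its range is separable.

Every set of times has a countable coinitial subset. Applying this to the preimages of small balls
around a countable dense subset of the range gives a sequence of times `s` such that every `t` is
matched, up to any `ε > 0`, by some `s i ≤ t` with `‖g (s i) - g t‖₁ < ε`
(`exists_seq_le_edist_lt`). Let `σₙ t = s i` for the least index `i` that works for `ε = 2⁻ⁿ`.
Since `σₙ` is measurable with countably many values and `σₙ t ≤ t`, the process `b (σₙ t)` is
progressively measurable (`isStronglyProgressive_comp_seq`). Since `∑ₙ ‖g (σₙ t) - g t‖₁ < ∞`, for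
each fixed `t` almost surely `g (σₙ t) → g t`, hence `b (σₙ t) → b t`. The modification is the
pointwise limit of these processes, with the default value where there is no limit.
-/

open MeasureTheory Filter
open scoped NNReal

/-- The map `t ↦ [g t]` is well defined and strongly measurable from `T` to `L¹(P)`. -/
def L1Measurable {T Ω : Type*} [MeasurableSpace T] [MeasurableSpace Ω] (P : Measure Ω)
    (g : T × Ω → ℝ) : Prop :=
  ∃ Φ : T → Lp ℝ 1 P, StronglyMeasurable Φ ∧ ∀ t, Φ t =ᵐ[P] fun ω => g (t, ω)

section L1

variable {T Ω : Type*} [MeasurableSpace T] [MeasurableSpace Ω] {P : Measure Ω}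

lemma L1Measurable.add {g h : T × Ω → ℝ} (hg : L1Measurable P g) (hh : L1Measurable P h) :
    L1Measurable P (g + h) := by
  obtain ⟨Φ, hΦ, hΦg⟩ := hg
  obtain ⟨Ψ, hΨ, hΨh⟩ := hh
  refine ⟨Φ + Ψ, hΦ.add hΨ, fun t => ?_⟩
  filter_upwards [Lp.coeFn_add (Φ t) (Ψ t), hΦg t, hΨh t] with ω h1 h2 h3
  simp only [Pi.add_apply] at h1 ⊢
  rw [h1, h2, h3]

lemma L1Measurable.const_smul {g : T × Ω → ℝ} (c : ℝ) (hg : L1Measurable P g) :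
    L1Measurable P (c • g) := by
  obtain ⟨Φ, hΦ, hΦg⟩ := hg
  refine ⟨c • Φ, hΦ.const_smul c, fun t => ?_⟩
  filter_upwards [Lp.coeFn_smul c (Φ t), hΦg t] with ω h1 h2
  simp only [Pi.smul_apply] at h1 ⊢
  rw [h1, h2]

lemma L1Measurable.sum {ι : Type*} (s : Finset ι) {g : ι → T × Ω → ℝ}
    (h0 : L1Measurable P (0 : T × Ω → ℝ)) (hg : ∀ i, L1Measurable P (g i)) :
    L1Measurable P (∑ i ∈ s, g i) := by
  classical
  induction s using Finset.induction with
  | empty => simpa using h0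
  | insert a s ha ih => rw [Finset.sum_insert ha]; exact (hg a).add ih

/-- Closure under bounded pointwise limits, by dominated convergence. -/
lemma L1Measurable.of_tendsto [IsFiniteMeasure P] {g : ℕ → T × Ω → ℝ} {h : T × Ω → ℝ} (C : ℝ)
    (hg : ∀ n, L1Measurable P (g n)) (hC : ∀ n p, ‖g n p‖ ≤ C)
    (hlim : ∀ p, Tendsto (fun n => g n p) atTop (nhds (h p))) :
    L1Measurable P h := by
  choose Φ hΦ hΦg using hg
  have hm : ∀ n t, AEStronglyMeasurable (fun ω => g n (t, ω)) P := fun n t =>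
    (Lp.aestronglyMeasurable (Φ n t)).congr (hΦg n t)
  have hh : ∀ t, MemLp (fun ω => h (t, ω)) 1 P := fun t => by
    refine MemLp.of_bound (aestronglyMeasurable_of_tendsto_ae atTop (fun n => hm n t)
      (Eventually.of_forall fun ω => hlim (t, ω))) C (Eventually.of_forall fun ω => ?_)
    exact le_of_tendsto (hlim (t, ω)).norm (Eventually.of_forall fun n => hC n _)
  refine ⟨fun t => (hh t).toLp, stronglyMeasurable_of_tendsto atTop hΦ ?_,
    fun t => (hh t).coeFn_toLp⟩
  rw [tendsto_pi_nhds]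
  intro t
  rw [Lp.tendsto_Lp_iff_tendsto_eLpNorm']
  have key := tendsto_lintegral_norm_of_dominated_convergence (μ := P)
    (F := fun n ω => g n (t, ω)) (f := fun ω => h (t, ω)) (bound := fun _ => C)
    (fun n => hm n t) (integrable_const C).2 (fun n => Eventually.of_forall fun ω => hC n _)
    (Eventually.of_forall fun ω => hlim (t, ω))
  refine key.congr fun n => ?_
  rw [eLpNorm_one_eq_lintegral_enorm]
  refine lintegral_congr_ae ?_
  filter_upwards [hΦg n t, (hh t).coeFn_toLp] with ω h1 h2
  rw [Pi.sub_apply, h1, h2, ofReal_norm]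

lemma L1Measurable.indicator [IsFiniteMeasure P] {S : Set (T × Ω)} (hS : MeasurableSet S) :
    L1Measurable P (S.indicator 1) := by
  have rect : ∀ (A : Set T) (B : Set Ω), MeasurableSet A → MeasurableSet B →
      L1Measurable P ((A ×ˢ B).indicator 1) := by
    intro A B hA hB
    refine ⟨A.indicator fun _ => indicatorConstLp 1 hB (measure_ne_top P B) (1 : ℝ),
      stronglyMeasurable_const.indicator hA, fun t => ?_⟩
    by_cases ht : t ∈ A
    · filter_upwards [indicatorConstLp_coeFn (p := 1) (hs := hB) (hμs := measure_ne_top P B)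
        (c := (1 : ℝ))] with ω hω
      simp only [Set.indicator_of_mem ht, hω]
      by_cases hB : ω ∈ B <;> simp [ht, hB]
    · filter_upwards [Lp.coeFn_zero ℝ 1 P] with ω hω
      simp only [Set.indicator_of_notMem ht, hω]
      simp [ht]
  have zero : L1Measurable P (0 : T × Ω → ℝ) := by
    convert rect ∅ ∅ .empty .empty using 1
    ext p
    simp
  have one : L1Measurable P (1 : T × Ω → ℝ) := by
    simpa using rect .univ .univ .univ .univ
  induction S, hS using MeasurableSpace.induction_on_inter generateFrom_prod.symm
    isPiSystem_prod with
  | empty => rw [Set.indicator_empty]; exact zero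
  | basic S hS =>
    obtain ⟨A, hA, B, hB, rfl⟩ := hS
    exact rect A B hA hB
  | compl S hS ih =>
    have : (Sᶜ.indicator 1 : T × Ω → ℝ) = 1 + (-1 : ℝ) • S.indicator 1 := by
      ext p
      by_cases hp : p ∈ S <;> simp [hp]
    rw [this]
    exact one.add (ih.const_smul _)
  | iUnion f hd hf ih =>
    refine L1Measurable.of_tendsto (g := fun n => (⋃ i ∈ Finset.range n, f i).indicator 1) 1
      (fun n => ?_) (fun n p => ?_) fun p => ?_
    · rw [Finset.indicator_biUnion _ _ fun i _ j _ hij => hd hij]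
      convert L1Measurable.sum (Finset.range n) zero ih using 1
      ext p
      simp
    · refine (norm_indicator_le_norm_self _ _).trans ?_
      simp
    · exact ((tendsto_indicator_biUnion_finset f (1 : T × Ω → ℝ) p).mono_right
        (pure_le_nhds _)).comp tendsto_finset_range

lemma L1Measurable.simpleFunc [IsFiniteMeasure P] (g : SimpleFunc (T × Ω) ℝ) :
    L1Measurable P g := by
  induction g using SimpleFunc.induction with
  | @const c s hs =>
    convert (L1Measurable.indicator (P := P) hs).const_smul c using 1
    ext p
    by_cases hp : p ∈ s <;> simp [hp]
  | add _ hf hg => exact hf.add hg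

lemma L1Measurable.of_bounded [IsFiniteMeasure P] {g : T × Ω → ℝ} (hg : Measurable g) {C : ℝ}
    (hC : ∀ p, ‖g p‖ ≤ C) (hC0 : 0 ≤ C) : L1Measurable P g :=
  .of_tendsto C (fun n => .simpleFunc (hg.stronglyMeasurable.approxBounded C n))
    (fun n p => hg.stronglyMeasurable.norm_approxBounded_le hC0 n p)
    fun p => hg.stronglyMeasurable.tendsto_approxBounded_of_norm_le (hC p)

end L1

lemma exists_countable_coinitial (A : Set ℝ≥0) :
    ∃ C : Set ℝ≥0, C.Countable ∧ C ⊆ A ∧ ∀ t ∈ A, ∃ s ∈ C, s ≤ t := by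
  rcases A.eq_empty_or_nonempty with rfl | hne
  · exact ⟨∅, Set.countable_empty, subset_rfl, by simp⟩
  obtain ⟨u, -, hu, huA⟩ := exists_seq_tendsto_sInf hne (OrderBot.bddBelow A)
  by_cases hmin : sInf A ∈ A
  · exact ⟨{sInf A}, Set.countable_singleton _, by simpa using hmin,
      fun t ht => ⟨_, rfl, csInf_le (OrderBot.bddBelow A) ht⟩⟩
  · refine ⟨Set.range u, Set.countable_range u, Set.range_subset_iff.2 huA, fun t ht => ?_⟩
    have hlt : sInf A < t := lt_of_le_of_ne (csInf_le (OrderBot.bddBelow A) ht)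
      fun h => hmin (h ▸ ht)
    obtain ⟨n, hn⟩ := (hu.eventually_lt_const hlt).exists
    exact ⟨_, ⟨n, rfl⟩, hn.le⟩

/-- The separable range of `Φ` can be approximated by the values of `Φ` at countably many times,
looking only into the past. -/
lemma exists_seq_le_edist_lt {E : Type*} [PseudoEMetricSpace E] {Φ : ℝ≥0 → E}
    (hΦ : TopologicalSpace.IsSeparable (Set.range Φ)) :
    ∃ s : ℕ → ℝ≥0, ∀ (n : ℕ) (t : ℝ≥0), ∃ i, s i ≤ t ∧ edist (Φ (s i)) (Φ t) < (2⁻¹) ^ n := by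
  obtain ⟨D, hD, hDΦ⟩ := hΦ
  choose C hC hCA hCle using fun (x : E) (n : ℕ) =>
    exists_countable_coinitial {t | edist (Φ t) x < (2⁻¹) ^ (n + 1)}
  have hcount : (⋃ x ∈ D, ⋃ n, C x n).Countable :=
    hD.biUnion fun x _ => Set.countable_iUnion fun n => hC x n
  have key : ∀ (n : ℕ) (t : ℝ≥0), ∃ s ∈ ⋃ x ∈ D, ⋃ n, C x n,
      s ≤ t ∧ edist (Φ s) (Φ t) < (2⁻¹) ^ n := by
    intro n t
    have hpos : (0 : ENNReal) < (2⁻¹) ^ (n + 1) := ENNReal.pow_pos (by simp) _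
    obtain ⟨x, hx, hxt⟩ := EMetric.mem_closure_iff.1 (hDΦ ⟨t, rfl⟩) _ hpos
    obtain ⟨s, hs, hst⟩ := hCle x n t hxt
    refine ⟨s, Set.mem_biUnion hx (Set.mem_iUnion.2 ⟨n, hs⟩), hst, ?_⟩
    have hsx : edist (Φ s) x < (2⁻¹) ^ (n + 1) := hCA x n hs
    calc edist (Φ s) (Φ t) ≤ edist (Φ s) x + edist (Φ t) x := edist_triangle_right _ _ _
      _ < (2⁻¹) ^ (n + 1) + (2⁻¹) ^ (n + 1) := ENNReal.add_lt_add hsx hxt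
      _ = (2⁻¹) ^ n := by
        rw [pow_succ, ← mul_add, ENNReal.inv_two_add_inv_two, mul_one]
  obtain ⟨s, hs⟩ := hcount.exists_eq_range (let ⟨s, hs, _⟩ := key 0 0; ⟨s, hs⟩)
  refine ⟨s, fun n t => ?_⟩
  obtain ⟨_, hr, h⟩ := key n t
  rw [hs] at hr
  obtain ⟨i, rfl⟩ := hr
  exact ⟨i, h⟩

/-- Sampling an adapted process at a measurable, countably valued time that never exceeds the
current one gives a progressive process. -/
lemma isStronglyProgressive_comp_seq {Ω : Type*} {mΩ : MeasurableSpace Ω} {F : Filtration ℝ≥0 mΩ}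
    {b : ℝ≥0 → Ω → ℝ} (hb : Adapted F b) (s : ℕ → ℝ≥0) {i : ℝ≥0 → ℕ} (hi : Measurable i)
    (hle : ∀ t, s (i t) ≤ t) : IsStronglyProgressive F fun t ω => b (s (i t)) ω := by
  intro T
  let _ : MeasurableSpace Ω := F T
  refine Measurable.stronglyMeasurable ?_
  -- Only the indices `j` with `s j ≤ T` occur up to time `T`; the others are cut off.
  let h : ℕ × Ω → ℝ := fun p => if s p.1 ≤ T then b (s p.1) p.2 else 0
  have hh : Measurable h := by
    refine measurable_from_prod_countable_right fun j => ?_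
    by_cases hj : s j ≤ T
    · simpa only [h, if_pos hj] using (hb (s j)).mono (F.mono hj) le_rfl
    · simpa only [h, if_neg hj] using measurable_const
  have hcomp : Measurable fun p : Set.Iic T × Ω => h (i p.1, p.2) :=
    hh.comp ((hi.comp (measurable_subtype_coe.comp measurable_fst)).prodMk measurable_snd)
  convert! hcomp using 2 with p
  exact (if_pos ((hle p.1).trans p.1.2)).symm

lemma ae_tendsto_of_lintegral_edist_le {Ω : Type*} [MeasurableSpace Ω] {P : Measure Ω}
    {f : ℕ → Ω → ℝ} {g : Ω → ℝ} (hf : ∀ n, Measurable (f n)) (hg : Measurable g)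
    (h : ∀ n, ∫⁻ ω, edist (f n ω) (g ω) ∂P ≤ (2⁻¹) ^ n) :
    ∀ᵐ ω ∂P, Tendsto (fun n => f n ω) atTop (nhds (g ω)) := by
  have hm : ∀ n, Measurable fun ω => edist (f n ω) (g ω) := fun n => (hf n).edist hg
  have hfin : ∫⁻ ω, ∑' n, edist (f n ω) (g ω) ∂P ≠ ⊤ := by
    rw [lintegral_tsum fun n => (hm n).aemeasurable]
    refine ne_top_of_le_ne_top ?_ (ENNReal.tsum_le_tsum h)
    rw [ENNReal.tsum_geometric, ENNReal.one_sub_inv_two, inv_inv]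
    exact ENNReal.ofNat_ne_top
  filter_upwards [ae_lt_top (Measurable.tsum hm) hfin] with ω hω
  exact tendsto_iff_edist_tendsto_0.2 (ENNReal.tendsto_atTop_zero_of_tsum_ne_top hω.ne)

/-- Every jointly measurable adapted real-valued process on `[0,∞)` has a
progressively measurable modification. -/
theorem exists_progMeasurable_modification
    {Ω : Type*} {mΩ : MeasurableSpace Ω}
    (P : Measure Ω) [IsProbabilityMeasure P] [P.IsComplete]
    (F : Filtration ℝ≥0 mΩ)
    (hF : ∀ t : ℝ≥0, ∀ s : Set Ω, MeasurableSet s → P s = 0 → MeasurableSet[F t] s)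
    (b : ℝ≥0 → Ω → ℝ)
    (hmeas : Measurable (Function.uncurry b)) (hadapted : Adapted F b) :
    ∃ b' : ℝ≥0 → Ω → ℝ, ProgMeasurable F b' ∧ ∀ t : ℝ≥0, ∀ᵐ ω ∂P, b' t ω = b t ω := by
  classical
  have hbt : ∀ t, Measurable (b t) := fun t => (hadapted t).mono (F.le t) le_rfl
  obtain ⟨Φ, hΦ, hΦb⟩ : L1Measurable P fun p : ℝ≥0 × Ω => Real.arctan (b p.1 p.2) :=
    L1Measurable.of_bounded (Real.measurable_arctan.comp hmeas) (C := Real.pi / 2)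
      (fun p => abs_le.2 ⟨(Real.arctan_mem_Ioo _).1.le, (Real.arctan_mem_Ioo _).2.le⟩)
      Real.pi_div_two_pos.le
  obtain ⟨s, hs⟩ := exists_seq_le_edist_lt hΦ.isSeparable_range
  let i : ℕ → ℝ≥0 → ℕ := fun n t => Nat.find (hs n t)
  have hi : ∀ n t, s (i n t) ≤ t ∧ edist (Φ (s (i n t))) (Φ t) < (2⁻¹) ^ n :=
    fun n t => Nat.find_spec (hs n t)
  have him : ∀ n, Measurable (i n) := fun n => by
    refine measurable_find (hs n) fun k => ?_
    refine MeasurableSet.inter measurableSet_Ici ?_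
    have : StronglyMeasurable fun t => edist (Φ (s k)) (Φ t) :=
      (continuous_const.edist continuous_id).comp_stronglyMeasurable hΦ
    exact measurableSet_lt this.measurable measurable_const
  refine ⟨fun t ω => limUnder atTop fun n => b (s (i n t)) ω, fun T => ?_, fun t => ?_⟩
  · let _ : MeasurableSpace Ω := F T
    exact StronglyMeasurable.limUnder fun n =>
      isStronglyProgressive_comp_seq hadapted s (him n) (fun t => (hi n t).1) T
  · have hlim : ∀ᵐ ω ∂P, Tendsto (fun n => Real.arctan (b (s (i n t)) ω)) atTop
        (nhds (Real.arctan (b t ω))) := by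
      refine ae_tendsto_of_lintegral_edist_le (fun n => Real.measurable_arctan.comp (hbt _))
        (Real.measurable_arctan.comp (hbt t)) fun n => ?_
      refine le_trans (le_of_eq ?_) (hi n t).2.le
      rw [L1.edist_def]
      refine lintegral_congr_ae ?_
      filter_upwards [hΦb (s (i n t)), hΦb t] with ω h1 h2
      rw [h1, h2]
    filter_upwards [hlim] with ω hω
    have htan := (Real.continuousAt_tan.2 (Real.cos_arctan_pos (b t ω)).ne').tendsto.comp hω
    simp only [Function.comp_def, Real.tan_arctan] at htan
    exact htan.limUnder_eq
end
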